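/- Convergence for s < 1/2. Assume (H1)–(H4) and s ∈ (0,1/2). For each ε > 0 let u^ε be the unique viscosity solution of ∂_t u^ε = I_s[u^ε(t,·)] − W'(u^ε/ε^{2s}) + σ(t/ε^{2s}, x/ε) on ℝ⁺×ℝ^N with u^ε(0,x)=u₀(x), and let u⁰ be the unique viscosity solution of ∂_t u = H̄₂(I_s[u(t,·)]) on ℝ⁺×ℝ^N with u(0,x)=u₀(x), where H̄₂(L) := H̄(0,L). Then u^ε converges to u⁰ locally uniformly in (t,x) as ε → 0. -/

import Mathlib

/-!
The proof compares `u^ε` with `u⁰` directly, by a perturbed-test-function argument inside a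
doubling of variables; only one inequality is needed, since the problem is invariant under
`u ↦ -u` (with `W'`, `σ`, `H̄` reflected).

Suppose `u^ε - u⁰` exceeds `η` somewhere. Penalising by `c|x - x'|² + c(t - t')² + κ t` and adding a
small bump, one finds a maximum point (`exists_doubled_max`); barriers that are linear in time
(`ViscSup.barrier`) keep it away from `t = 0`. Testing `u⁰` there gives `H̄(0, ℓ) ≤ b`, where `b` is
the time slope and `ℓ` the nonlocal term of `u⁰` (`doubled_test`). At the same point `u^ε` is touched
from above with time slope `b + κ`, and its far field is controlled by that of `u⁰`
(`doubled_touch`). Since `s < 1/2`, a function with linear growth near a point has a finite nonlocal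
term there, so the whole macroscopic gradient contributes only an error that vanishes with the
radius `r` of the excluded ball; this is why only `p = 0` occurs in the effective equation.

After zooming by `ε` in space and `ε^{2s}` in time around the maximum point, `u^ε` becomes a
subsolution `v` of the cell equation on a large ball, its exterior contributing at most a constant
`L - δ` slightly larger than `ℓ` to the nonlocal term. A comparison argument on that ball
(`cell_comparison`) bounds `v` by the supersolution `w` of the cell problem with forcing `L`, whose
slope is `H̄(0, L)`. Over a long microscopic time this gives `b + κ ≤ H̄(0, L) + κ/4` (`micro`), and
the continuity of `H̄` contradicts `H̄(0, ℓ) ≤ b`. All constants are uniform in the contact point, and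
`L` ranges over a finite grid, so the contradiction holds for all small `ε` (`one_sided`).
-/

open MeasureTheory Filter Metric Set RealInnerProductSpace

noncomputable section

/-- `ℝ^N` as a Euclidean space. -/
abbrev EN (N : ℕ) := EuclideanSpace ℝ (Fin N)

/-- The singular kernel `g(z/|z|) |z|^{-N-2s}` of the anisotropic Lévy operator. -/
noncomputable def levyKernel (N : ℕ) (s : ℝ) (g : EN N → ℝ) (z : EN N) : ℝ :=
  g (‖z‖⁻¹ • z) * ‖z‖ ^ (-(N : ℝ) - 2 * s)

/-- `I^{1,r}[φ, x]`: integral over `|z| ≤ r` of the second order increment of `φ`. -/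
noncomputable def levyI1 (N : ℕ) (s : ℝ) (g : EN N → ℝ) (φ : EN N → ℝ) (r : ℝ) (x : EN N) : ℝ :=
  ∫ z in {z : EN N | ‖z‖ ≤ r}, (φ (x + z) - φ x - fderiv ℝ φ x z) * levyKernel N s g z

/-- `I^{2,r}[u, x]`: integral over `|z| > r` of the increment of `u`. -/
noncomputable def levyI2 (N : ℕ) (s : ℝ) (g : EN N → ℝ) (u : EN N → ℝ) (r : ℝ) (x : EN N) : ℝ :=
  ∫ z in {z : EN N | r < ‖z‖}, (u (x + z) - u x) * levyKernel N s g z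

/-- The anisotropic Lévy operator `I_s` of order `2s`, defined as a principal value. -/
noncomputable def levyOp (N : ℕ) (s : ℝ) (g : EN N → ℝ) (φ : EN N → ℝ) (x : EN N) : ℝ :=
  limUnder (nhdsWithin 0 (Ioi (0:ℝ)))
    (fun ρ => ∫ y in {y : EN N | ρ < ‖y‖}, (φ (x + y) - φ x) * levyKernel N s g y)

/-- (H1): `g` is continuous, positive on the sphere and even. -/
def H1 (N : ℕ) (g : EN N → ℝ) : Prop :=
  Continuous g ∧ (∀ z : EN N, ‖z‖ = 1 → 0 < g z) ∧ (∀ z : EN N, g (-z) = g z)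

/-- (H2): `W ∈ C^{1,1}(ℝ)` and `W(v+1) = W(v)`. -/
def H2 (W : ℝ → ℝ) : Prop :=
  ContDiff ℝ 1 W ∧ (∃ K : NNReal, LipschitzWith K (deriv W)) ∧ ∀ v, W (v + 1) = W v

/-- (H3): `σ ∈ C^{0,1}(ℝ⁺ × ℝ^N)`, 1-periodic in `t` and ℤ^N-periodic in `x`. -/
def H3 (N : ℕ) (σ : ℝ → EN N → ℝ) : Prop :=
  (∃ K : NNReal, LipschitzWith K (fun q : ℝ × EN N => σ q.1 q.2)) ∧
  (∀ t x, σ (t + 1) x = σ t x) ∧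
  (∀ (k : Fin N → ℤ) (t : ℝ) (x : EN N), σ t (x + (WithLp.equiv 2 (Fin N → ℝ)).symm (fun j => (k j : ℝ))) = σ t x)

/-- (H4): `u₀ ∈ W^{2,∞}(ℝ^N)`. -/
def H4 (N : ℕ) (u₀ : EN N → ℝ) : Prop :=
  ContDiff ℝ 2 u₀ ∧
  ∃ M, ∀ x, |u₀ x| ≤ M ∧ ‖fderiv ℝ u₀ x‖ ≤ M ∧ ‖fderiv ℝ (fderiv ℝ u₀) x‖ ≤ M

/-- Boundedness on `(0,T) × ℝ^N` for every `T > 0`. -/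
def LocBddPos (N : ℕ) (u : ℝ → EN N → ℝ) : Prop :=
  ∀ T > 0, ∃ M, ∀ t ∈ Ioc (0:ℝ) T, ∀ x, |u t x| ≤ M

/-- Viscosity subsolution of `∂_t u = F(t, x, u, ∇_x u, I_s[u(t,·)])` with initial datum `u₀`. -/
def IsSubsol (N : ℕ) (s : ℝ) (g : EN N → ℝ)
    (F : ℝ → EN N → ℝ → (EN N →L[ℝ] ℝ) → ℝ → ℝ)
    (u₀ : EN N → ℝ) (u : ℝ → EN N → ℝ) : Prop :=
  UpperSemicontinuousOn (fun q : ℝ × EN N => u q.1 q.2) (Ici 0 ×ˢ univ) ∧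
  LocBddPos N u ∧
  (∀ x, u 0 x ≤ u₀ x) ∧
  ∀ (t₀ : ℝ) (x₀ : EN N), 0 < t₀ →
    ∀ (φ : ℝ → EN N → ℝ), ContDiff ℝ 2 (fun q : ℝ × EN N => φ q.1 q.2) →
    ∀ τ r : ℝ, 0 < τ → τ < t₀ → 0 < r →
    (∀ t x, t ∈ Ioo (t₀ - τ) (t₀ + τ) → x ∈ ball x₀ r →
      u t x - φ t x ≤ u t₀ x₀ - φ t₀ x₀) →
    deriv (fun t => φ t x₀) t₀ -
      F t₀ x₀ (u t₀ x₀) (fderiv ℝ (fun x => φ t₀ x) x₀)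
        (levyI1 N s g (fun x => φ t₀ x) r x₀ + levyI2 N s g (fun x => u t₀ x) r x₀) ≤ 0

/-- Viscosity supersolution of `∂_t u = F(t, x, u, ∇_x u, I_s[u(t,·)])` with initial datum `u₀`. -/
def IsSupersol (N : ℕ) (s : ℝ) (g : EN N → ℝ)
    (F : ℝ → EN N → ℝ → (EN N →L[ℝ] ℝ) → ℝ → ℝ)
    (u₀ : EN N → ℝ) (u : ℝ → EN N → ℝ) : Prop :=
  LowerSemicontinuousOn (fun q : ℝ × EN N => u q.1 q.2) (Ici 0 ×ˢ univ) ∧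
  LocBddPos N u ∧
  (∀ x, u₀ x ≤ u 0 x) ∧
  ∀ (t₀ : ℝ) (x₀ : EN N), 0 < t₀ →
    ∀ (φ : ℝ → EN N → ℝ), ContDiff ℝ 2 (fun q : ℝ × EN N => φ q.1 q.2) →
    ∀ τ r : ℝ, 0 < τ → τ < t₀ → 0 < r →
    (∀ t x, t ∈ Ioo (t₀ - τ) (t₀ + τ) → x ∈ ball x₀ r →
      u t₀ x₀ - φ t₀ x₀ ≤ u t x - φ t x) →
    0 ≤ deriv (fun t => φ t x₀) t₀ -
      F t₀ x₀ (u t₀ x₀) (fderiv ℝ (fun x => φ t₀ x) x₀)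
        (levyI1 N s g (fun x => φ t₀ x) r x₀ + levyI2 N s g (fun x => u t₀ x) r x₀)

/-- Viscosity solution in `C_b(ℝ⁺ × ℝ^N)`. -/
def IsSol (N : ℕ) (s : ℝ) (g : EN N → ℝ)
    (F : ℝ → EN N → ℝ → (EN N →L[ℝ] ℝ) → ℝ → ℝ)
    (u₀ : EN N → ℝ) (u : ℝ → EN N → ℝ) : Prop :=
  ContinuousOn (fun q : ℝ × EN N => u q.1 q.2) (Ici 0 ×ˢ univ) ∧
  IsSubsol N s g F u₀ u ∧ IsSupersol N s g F u₀ u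

/-- The right-hand side of the cell problem
`∂_τ w = I_s[w(τ,·)] + L − W'(w + p·y) + σ(τ,y)`. -/
def cellF (N : ℕ) (W : ℝ → ℝ) (σ : ℝ → EN N → ℝ) (p : EN N) (L : ℝ) :
    ℝ → EN N → ℝ → (EN N →L[ℝ] ℝ) → ℝ → ℝ :=
  fun τ y v _ I => I + L - deriv W (v + ⟪p, y⟫) + σ τ y

/-- `w(τ,y)/τ → lam` as `τ → +∞`, locally uniformly in `y`. -/
def SlopeLim (N : ℕ) (w : ℝ → EN N → ℝ) (lam : ℝ) : Prop :=
  ∀ ε > 0, ∀ R > 0, ∃ T : ℝ, ∀ τ, T ≤ τ → ∀ y : EN N, ‖y‖ ≤ R → |w τ y / τ - lam| ≤ ε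

end

/-! ### The kernel: integrability, moments and scaling -/

section Kernel

variable {N : ℕ} {s : ℝ} {g : EN N → ℝ}

theorem kernel_zero (hs : 0 < s) : levyKernel N s g 0 = 0 := by
  have : (-(N : ℝ) - 2 * s) ≠ 0 := by
    have : (0 : ℝ) ≤ N := Nat.cast_nonneg N
    linarith
  simp [levyKernel, Real.zero_rpow this]

theorem kernel_nonneg (hs : 0 < s) (hg : H1 N g) (z : EN N) : 0 ≤ levyKernel N s g z := by
  rcases eq_or_ne z 0 with rfl | hz
  · rw [kernel_zero hs]
  · refine mul_nonneg (hg.2.1 _ ?_).le (Real.rpow_nonneg (norm_nonneg _) _)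
    rw [norm_smul, norm_inv, norm_norm, inv_mul_cancel₀ (norm_ne_zero_iff.2 hz)]

theorem kernel_measurable (hg : H1 N g) : Measurable (levyKernel N s g) := by
  have h1 : Measurable fun z : EN N => ‖z‖⁻¹ • z := by fun_prop
  exact (hg.1.measurable.comp h1).mul (by fun_prop)

theorem kernel_le (hs : 0 < s) (hg : H1 N g) :
    ∃ G, 0 ≤ G ∧ ∀ z, levyKernel N s g z ≤ G * ‖z‖ ^ (-(N : ℝ) - 2 * s) := by
  obtain ⟨G, hG⟩ := (isCompact_sphere (0 : EN N) 1).bddAbove_image hg.1.continuousOn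
  refine ⟨|G|, abs_nonneg _, fun z => ?_⟩
  rcases eq_or_ne z 0 with rfl | hz
  · rw [kernel_zero hs]; positivity
  · refine mul_le_mul_of_nonneg_right ((hG ⟨_, ?_, rfl⟩).trans (le_abs_self G))
      (Real.rpow_nonneg (norm_nonneg _) _)
    rw [mem_sphere_zero_iff_norm, norm_smul, norm_inv, norm_norm,
      inv_mul_cancel₀ (norm_ne_zero_iff.2 hz)]

theorem kernel_scale {ε : ℝ} (hε : 0 < ε) (z : EN N) :
    levyKernel N s g (ε • z) = ε ^ (-(N : ℝ) - 2 * s) * levyKernel N s g z := by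
  have h : ‖ε • z‖⁻¹ • (ε • z) = ‖z‖⁻¹ • z := by
    rw [norm_smul, Real.norm_of_nonneg hε.le, mul_inv, smul_smul]
    congr 1
    field_simp
  rw [levyKernel, levyKernel, h, norm_smul, Real.norm_of_nonneg hε.le,
    Real.mul_rpow hε.le (norm_nonneg _)]
  ring

theorem measSet_le (r : ℝ) : MeasurableSet {z : EN N | ‖z‖ ≤ r} :=
  measurableSet_le measurable_norm measurable_const

theorem measSet_lt (r : ℝ) : MeasurableSet {z : EN N | r < ‖z‖} :=
  measurableSet_lt measurable_const measurable_norm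

/-- First moment of the kernel near the origin; finite precisely because `2s < 1`. -/
noncomputable def c1 (N : ℕ) (s : ℝ) (g : EN N → ℝ) (r : ℝ) : ℝ :=
  ∫ z in {z : EN N | ‖z‖ ≤ r}, ‖z‖ * levyKernel N s g z

/-- Mass of the kernel away from the origin. -/
noncomputable def c2 (N : ℕ) (s : ℝ) (g : EN N → ℝ) (r : ℝ) : ℝ :=
  ∫ z in {z : EN N | r < ‖z‖}, levyKernel N s g z

theorem c1_integrable (hN : 1 ≤ N) (hs : s ∈ Ioo (0 : ℝ) (1 / 2)) (hg : H1 N g) (r : ℝ) :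
    IntegrableOn (fun z : EN N => ‖z‖ * levyKernel N s g z) {z : EN N | ‖z‖ ≤ r} := by
  have : Nonempty (Fin N) := ⟨⟨0, hN⟩⟩
  obtain ⟨G, hG0, hG⟩ := kernel_le hs.1 hg
  have hsub : {z : EN N | ‖z‖ ≤ r} ⊆ ball 0 (|r| + 1) := fun z hz => by
    rw [mem_ball_zero_iff]
    have : ‖z‖ ≤ r := hz
    linarith [le_abs_self r]
  refine IntegrableOn.mono_set ?_ hsub
  have key : IntegrableOn (fun z : EN N => G * (‖z‖ * ‖z‖ ^ (-(N : ℝ) - 2 * s)))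
      (ball 0 (|r| + 1)) := by
    refine (integrableOn_fun_norm_addHaar (E := EN N) (μ := volume)
      (f := fun x => G * (x * x ^ (-(N : ℝ) - 2 * s)))).2 ?_
    have h1 : IntegrableOn (fun y : ℝ => G * y ^ (-(2 * s))) (Ioo 0 (|r| + 1)) := by
      have := (intervalIntegral.intervalIntegrable_rpow' (a := 0) (b := |r| + 1)
        (r := -(2 * s)) (by linarith [hs.2])).const_mul G
      rw [intervalIntegrable_iff_integrableOn_Ioo_of_le (by positivity)] at this
      exact this
    refine h1.congr_fun (fun y hy => ?_) measurableSet_Ioo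
    have hy0 : 0 < y := hy.1
    simp only [finrank_euclideanSpace, Fintype.card_fin, smul_eq_mul]
    rw [← Real.rpow_natCast, Nat.cast_sub hN, Nat.cast_one]
    nth_rewrite 3 [← Real.rpow_one y]
    rw [← Real.rpow_add hy0, mul_left_comm, ← Real.rpow_add hy0]
    congr 2; ring
  refine Integrable.mono' key ?_ (ae_of_all _ fun z => ?_)
  · exact (measurable_norm.mul (kernel_measurable hg)).aestronglyMeasurable
  · rw [Real.norm_of_nonneg (mul_nonneg (norm_nonneg _) (kernel_nonneg hs.1 hg z))]
    nlinarith [hG z, norm_nonneg z]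

theorem c2_integrable (hN : 1 ≤ N) (hs : s ∈ Ioo (0 : ℝ) (1 / 2)) (hg : H1 N g) {r : ℝ}
    (hr : 0 < r) :
    IntegrableOn (levyKernel N s g) {z : EN N | r < ‖z‖} := by
  have : Nonempty (Fin N) := ⟨⟨0, hN⟩⟩
  obtain ⟨G, hG0, hG⟩ := kernel_le hs.1 hg
  have key : Integrable (fun z : EN N =>
      (Ioi r).indicator (fun x : ℝ => G * x ^ (-(N : ℝ) - 2 * s)) ‖z‖) := by
    refine (integrable_fun_norm_addHaar (E := EN N) volume
      (f := (Ioi r).indicator (fun x : ℝ => G * x ^ (-(N : ℝ) - 2 * s)))).2 ?_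
    have h1 : IntegrableOn (fun y : ℝ => G * y ^ (-1 - 2 * s)) (Ioi r) :=
      (integrableOn_Ioi_rpow_of_lt (by linarith [hs.1]) hr).const_mul G
    have h2 := h1.integrable_indicator measurableSet_Ioi
    refine (h2.integrableOn (s := Ioi 0)).congr_fun (fun y hy => ?_) measurableSet_Ioi
    have hy0 : 0 < y := hy
    simp only [finrank_euclideanSpace, Fintype.card_fin, smul_eq_mul, indicator]
    split_ifs
    · rw [← Real.rpow_natCast, Nat.cast_sub hN, Nat.cast_one, mul_left_comm,
        ← Real.rpow_add hy0]
      congr 2; ring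
    · simp
  refine Integrable.mono' key.integrableOn (kernel_measurable hg).aestronglyMeasurable ?_
  refine (ae_restrict_iff' (measSet_lt r)).2 (ae_of_all _ fun z hz => ?_)
  have : ‖z‖ ∈ Ioi r := hz
  rw [Real.norm_of_nonneg (kernel_nonneg hs.1 hg z), indicator_of_mem this]
  exact hG z

theorem c1_nonneg (hs : 0 < s) (hg : H1 N g) (r : ℝ) : 0 ≤ c1 N s g r :=
  integral_nonneg fun z => mul_nonneg (norm_nonneg _) (kernel_nonneg hs hg z)

theorem c2_nonneg (hs : 0 < s) (hg : H1 N g) (r : ℝ) : 0 ≤ c2 N s g r :=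
  integral_nonneg fun z => kernel_nonneg hs hg z

/-- Change of variables `Z = ε z` in an integral against the kernel. -/
theorem kernel_integral_scale {ε : ℝ} (hε : 0 < ε) (S : Set (EN N))
    (hS : MeasurableSet S) (f : EN N → ℝ) :
    ∫ z in {z | ε • z ∈ S}, f (ε • z) * levyKernel N s g z
      = ε ^ (2 * s) * ∫ Z in S, f Z * levyKernel N s g Z := by
  have hm : MeasurableSet {z : EN N | ε • z ∈ S} := (measurable_const_smul ε) hS
  rw [← integral_indicator hm, ← integral_indicator hS]
  have h := Measure.integral_comp_smul (volume : Measure (EN N))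
    (S.indicator fun Z => f Z * levyKernel N s g Z) ε
  have hc : 0 < ε ^ (-(N : ℝ) - 2 * s) := Real.rpow_pos_of_pos hε _
  have e1 : ∀ z : EN N, ({z | ε • z ∈ S}.indicator fun z => f (ε • z) * levyKernel N s g z) z
      = (ε ^ (-(N : ℝ) - 2 * s))⁻¹ *
        (S.indicator fun Z => f Z * levyKernel N s g Z) (ε • z) := by
    intro z
    by_cases hz : ε • z ∈ S
    · rw [indicator_of_mem hz, indicator_of_mem (show z ∈ {z | ε • z ∈ S} from hz),
        kernel_scale hε]
      field_simp
    · rw [indicator_of_notMem hz, indicator_of_notMem (show z ∉ {z | ε • z ∈ S} from hz), mul_zero]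
  simp_rw [e1]
  rw [integral_const_mul, h, finrank_euclideanSpace, Fintype.card_fin, smul_eq_mul, ← mul_assoc]
  congr 1
  rw [abs_of_pos (by positivity), ← Real.rpow_natCast, ← Real.rpow_neg hε.le, ← Real.rpow_neg hε.le,
    ← Real.rpow_add hε]
  congr 1; ring

theorem c1_scale {r : ℝ} (hr : 0 < r) :
    c1 N s g r = r ^ (1 - 2 * s) * c1 N s g 1 := by
  have h := kernel_integral_scale (s := s) (g := g) hr {z : EN N | ‖z‖ ≤ r} (measSet_le r)
    (fun z => ‖z‖)
  have e : {z : EN N | r • z ∈ {z : EN N | ‖z‖ ≤ r}} = {z : EN N | ‖z‖ ≤ 1} := by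
    ext z
    simp only [mem_ofPred_eq, norm_smul, Real.norm_of_nonneg hr.le]
    constructor <;> intro h <;> nlinarith
  rw [e] at h
  simp only [norm_smul, Real.norm_of_nonneg hr.le, mul_assoc] at h
  rw [integral_const_mul] at h
  have h' : r * c1 N s g 1 = r ^ (2 * s) * c1 N s g r := h
  rw [Real.rpow_sub hr, Real.rpow_one]
  have := Real.rpow_pos_of_pos hr (2 * s)
  field_simp
  linarith

theorem c2_scale {ε : ℝ} (hε : 0 < ε) (r : ℝ) :
    c2 N s g r = ε ^ (2 * s) * c2 N s g (ε * r) := by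
  have h := kernel_integral_scale (s := s) (g := g) hε {z : EN N | ε * r < ‖z‖}
    (measSet_lt _) (fun z => 1)
  have e : {z : EN N | ε • z ∈ {z : EN N | ε * r < ‖z‖}} = {z : EN N | r < ‖z‖} := by
    ext z
    simp only [mem_ofPred_eq, norm_smul, Real.norm_of_nonneg hε.le]
    constructor <;> intro h <;> nlinarith
  rw [e] at h
  simpa [c2] using h

theorem levyI2_scale {ε : ℝ} (hε : 0 < ε) (u : EN N → ℝ) (r : ℝ) (x y : EN N)
    (hxy : x = ε • y) (a : ℝ) (k : EN N) (b : ℝ) :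
    levyI2 N s g (fun y => a * u (ε • (y + k)) - b) r y
      = a * ε ^ (2 * s) * levyI2 N s g u (ε * r) (x + ε • k) := by
  have h := kernel_integral_scale (s := s) (g := g) hε {z : EN N | ε * r < ‖z‖}
    (measSet_lt _) (fun Z => u (x + ε • k + Z) - u (x + ε • k))
  have e : {z : EN N | ε • z ∈ {z : EN N | ε * r < ‖z‖}} = {z : EN N | r < ‖z‖} := by
    ext z
    simp only [mem_ofPred_eq, norm_smul, Real.norm_of_nonneg hε.le]
    constructor <;> intro h <;> nlinarith
  rw [e] at h
  rw [mul_assoc, levyI2, levyI2, ← h, ← integral_const_mul]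
  congr 1
  ext z
  rw [hxy, show ε • (y + z + k) = ε • y + ε • k + ε • z by simp only [smul_add]; abel,
    show ε • (y + k) = ε • y + ε • k by simp only [smul_add]]
  ring

/-- The singular part of the operator is small at small radii. -/
theorem c1_small (hs : s ∈ Ioo (0 : ℝ) (1 / 2)) {e : ℝ} (he : 0 < e) :
    ∃ ρ₀ > 0, ∀ ρ, 0 < ρ → ρ ≤ ρ₀ → c1 N s g ρ ≤ e := by
  have hc : Tendsto (fun r : ℝ => r ^ (1 - 2 * s) * c1 N s g 1) (nhdsWithin 0 (Ioi 0))
      (nhds (0 ^ (1 - 2 * s) * c1 N s g 1)) := by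
    refine Tendsto.mul_const _ ?_
    refine ((Real.continuousAt_rpow_const 0 (1 - 2 * s) (Or.inr ?_)).tendsto).mono_left
      nhdsWithin_le_nhds
    linarith [hs.2]
  rw [Real.zero_rpow (by linarith [hs.2]), zero_mul] at hc
  have h := (hc.eventually (gt_mem_nhds he))
  rw [eventually_nhdsWithin_iff, Metric.eventually_nhds_iff] at h
  obtain ⟨d, hd, h⟩ := h
  refine ⟨d / 2, by positivity, fun ρ h0 h1 => ?_⟩
  rw [c1_scale h0]
  refine (h (y := ρ) ?_ h0).le
  rw [Real.dist_eq, sub_zero, abs_of_pos h0]; linarith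

theorem c2_tendsto (hs : s ∈ Ioo (0 : ℝ) (1 / 2)) :
    Tendsto (fun r => c2 N s g r) atTop (nhds 0) := by
  have h1 : Tendsto (fun r : ℝ => r ^ (-(2 * s)) * c2 N s g 1) atTop (nhds (0 * c2 N s g 1)) :=
    (tendsto_rpow_neg_atTop (by linarith [hs.1])).mul_const _
  rw [zero_mul] at h1
  refine h1.congr' ?_
  filter_upwards [eventually_gt_atTop 0] with r hr
  have := c2_scale (s := s) (g := g) hr 1
  rw [mul_one] at this
  rw [this, ← mul_assoc, ← Real.rpow_add hr]
  simp

/-- A bump of width `R` has a Lévy operator of size `R ^ (-2s)`. -/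
theorem c1_div_tendsto (hs : s ∈ Ioo (0 : ℝ) (1 / 2)) :
    Tendsto (fun r => r⁻¹ * c1 N s g r) atTop (nhds 0) := by
  have h1 : Tendsto (fun r : ℝ => r ^ (-(2 * s)) * c1 N s g 1) atTop (nhds (0 * c1 N s g 1)) :=
    (tendsto_rpow_neg_atTop (by linarith [hs.1])).mul_const _
  rw [zero_mul] at h1
  refine h1.congr' ?_
  filter_upwards [eventually_gt_atTop 0] with r hr
  rw [c1_scale hr, ← mul_assoc]
  congr 1
  rw [← Real.rpow_neg_one, ← Real.rpow_add hr]
  congr 1; ring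

end Kernel

/-! ### Estimates for the two parts of the Lévy operator -/

section Operators

variable {N : ℕ} {s : ℝ} {g : EN N → ℝ}

theorem levyI1_bound (hN : 1 ≤ N) (hs : s ∈ Ioo (0 : ℝ) (1 / 2)) (hg : H1 N g)
    {φ : EN N → ℝ} {r C : ℝ} {x : EN N}
    (h : ∀ z, ‖z‖ ≤ r → |φ (x + z) - φ x - fderiv ℝ φ x z| ≤ C * ‖z‖) :
    |levyI1 N s g φ r x| ≤ C * c1 N s g r := by
  rw [c1, ← integral_const_mul, ← Real.norm_eq_abs, levyI1]
  refine norm_integral_le_of_norm_le ((c1_integrable hN hs hg r).const_mul C) ?_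
  refine (ae_restrict_iff' (measSet_le r)).2 (ae_of_all _ fun z hz => ?_)
  rw [norm_mul, Real.norm_eq_abs, Real.norm_of_nonneg (kernel_nonneg hs.1 hg z), ← mul_assoc]
  exact mul_le_mul_of_nonneg_right (h z hz) (kernel_nonneg hs.1 hg z)

theorem levyI1_small (hN : 1 ≤ N) (hs : s ∈ Ioo (0 : ℝ) (1 / 2)) (hg : H1 N g)
    {φ : EN N → ℝ} {x : EN N} (h : DifferentiableAt ℝ φ x) {e : ℝ} (he : 0 < e) :
    ∃ ρ₀ > 0, ∀ ρ, 0 < ρ → ρ ≤ ρ₀ → |levyI1 N s g φ ρ x| ≤ e := by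
  have h1 := (hasFDerivAt_iff_isLittleO_nhds_zero.1 h.hasFDerivAt).bound (zero_lt_one)
  rw [Metric.eventually_nhds_iff] at h1
  obtain ⟨d, hd, h1⟩ := h1
  obtain ⟨ρ₁, hρ₁, h2⟩ := c1_small (N := N) (g := g) hs he
  refine ⟨min (d / 2) ρ₁, by positivity, fun ρ h0 hρ => ?_⟩
  refine (levyI1_bound hN hs hg (C := 1) fun z hz => ?_).trans ?_
  · have := h1 (y := z) (by
      rw [dist_zero_right]
      linarith [hρ.trans (min_le_left _ _)])
    simpa using this
  · rw [one_mul]; exact h2 ρ h0 (hρ.trans (min_le_right _ _))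

theorem incr_integrable (hN : 1 ≤ N) (hs : s ∈ Ioo (0 : ℝ) (1 / 2)) (hg : H1 N g)
    {u : EN N → ℝ} (hu : Continuous u) {M : ℝ} (hM : ∀ x, |u x| ≤ M) {r : ℝ} (hr : 0 < r)
    (x : EN N) :
    IntegrableOn (fun z => (u (x + z) - u x) * levyKernel N s g z) {z : EN N | r < ‖z‖} := by
  refine Integrable.mono' ((c2_integrable hN hs hg hr).const_mul (2 * M)) ?_ (ae_of_all _ fun z => ?_)
  · have h1 : Measurable fun z => u (x + z) - u x := by fun_prop
    exact (h1.mul (kernel_measurable hg)).aestronglyMeasurable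
  · rw [norm_mul, Real.norm_of_nonneg (kernel_nonneg hs.1 hg z)]
    refine mul_le_mul_of_nonneg_right ?_ (kernel_nonneg hs.1 hg z)
    rw [Real.norm_eq_abs]
    have h1 := abs_sub (u (x + z)) (u x)
    linarith [hM (x + z), hM x]

/-- Upper bound for `I^{2,ρ}` when the increments are bounded above by `a + C‖z‖` for
`ρ < ‖z‖ ≤ R` and by `a + γ` plus the increments of another function for `‖z‖ > R`. -/
theorem levyI2_far (hN : 1 ≤ N) (hs : s ∈ Ioo (0 : ℝ) (1 / 2)) (hg : H1 N g)
    {u w : EN N → ℝ} (hu : Continuous u) {M : ℝ} (hM : ∀ x, |u x| ≤ M)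
    (hw : Continuous w) {M' : ℝ} (hM' : ∀ x, |w x| ≤ M')
    {ρ R a C γ : ℝ} (hρ : 0 < ρ) (hρR : ρ ≤ R) (hC : 0 ≤ C) (x y : EN N)
    (h1 : ∀ z, ρ < ‖z‖ → ‖z‖ ≤ R → u (x + z) - u x ≤ a + C * ‖z‖)
    (h2 : ∀ z, R < ‖z‖ → u (x + z) - u x ≤ a + γ + (w (y + z) - w y)) :
    levyI2 N s g u ρ x
      ≤ a * c2 N s g ρ + C * c1 N s g R + γ * c2 N s g R + levyI2 N s g w R y := by
  have hR : 0 < R := hρ.trans_le hρR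
  have i1 := IntegrableOn.integrable_indicator
    ((c1_integrable hN hs hg R).const_mul C) (measSet_le R)
  have i2 := IntegrableOn.integrable_indicator
    ((c2_integrable hN hs hg hR).const_mul γ) (measSet_lt R)
  have i3 := (incr_integrable hN hs hg hw hM' hR y).integrable_indicator (measSet_lt R)
  have i0 := (c2_integrable hN hs hg hρ).const_mul a
  have sub : {z : EN N | R < ‖z‖} ⊆ {z : EN N | ρ < ‖z‖} := fun z hz => lt_of_le_of_lt hρR hz
  have i1n : 0 ≤ fun z : EN N => {z : EN N | ‖z‖ ≤ R}.indicator
      (fun z => C * (‖z‖ * levyKernel N s g z)) z := fun z =>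
    indicator_nonneg (fun z _ => mul_nonneg hC (mul_nonneg (norm_nonneg _) (kernel_nonneg hs.1 hg z))) z
  have b1 : ∫ z in {z : EN N | ρ < ‖z‖}, {z : EN N | ‖z‖ ≤ R}.indicator
      (fun z => C * (‖z‖ * levyKernel N s g z)) z ≤ C * c1 N s g R := by
    refine (setIntegral_le_integral i1 (ae_of_all _ i1n)).trans ?_
    rw [integral_indicator (measSet_le R), integral_const_mul, c1]
  have b2 : ∫ z in {z : EN N | ρ < ‖z‖}, {z : EN N | R < ‖z‖}.indicator
      (fun z => γ * levyKernel N s g z) z = γ * c2 N s g R := by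
    rw [setIntegral_indicator (measSet_lt R), inter_eq_self_of_subset_right sub,
      integral_const_mul, c2]
  have b3 : ∫ z in {z : EN N | ρ < ‖z‖}, {z : EN N | R < ‖z‖}.indicator
      (fun z => (w (y + z) - w y) * levyKernel N s g z) z = levyI2 N s g w R y := by
    rw [setIntegral_indicator (measSet_lt R), inter_eq_self_of_subset_right sub, levyI2]
  have b0 : ∫ z in {z : EN N | ρ < ‖z‖}, a * levyKernel N s g z = a * c2 N s g ρ := by
    rw [integral_const_mul, c2]
  rw [← b0, ← b2, ← b3]
  refine le_trans ?_ (add_le_add_left (add_le_add_left (add_le_add_right b1 _) _) _)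
  rw [← integral_add i0 i1.integrableOn, ← integral_add _ i2.integrableOn,
    ← integral_add _ i3.integrableOn, levyI2]
  · refine setIntegral_mono_on (incr_integrable hN hs hg hu hM hρ x)
      (((i0.add i1.integrableOn).add i2.integrableOn).add i3.integrableOn)
      (measSet_lt ρ) fun z hz => ?_
    have hk := kernel_nonneg (g := g) hs.1 hg z
    rcases le_or_gt ‖z‖ R with hzR | hzR
    · rw [indicator_of_mem (show z ∈ {z : EN N | ‖z‖ ≤ R} from hzR),
        indicator_of_notMem (show z ∉ {z : EN N | R < ‖z‖} from not_lt.2 hzR),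
        indicator_of_notMem (show z ∉ {z : EN N | R < ‖z‖} from not_lt.2 hzR)]
      nlinarith [h1 z hz hzR]
    · rw [indicator_of_notMem (show z ∉ {z : EN N | ‖z‖ ≤ R} from not_le.2 hzR),
        indicator_of_mem (show z ∈ {z : EN N | R < ‖z‖} from hzR),
        indicator_of_mem (show z ∈ {z : EN N | R < ‖z‖} from hzR)]
      nlinarith [h2 z hzR]
  · exact (i0.add i1.integrableOn).add i2.integrableOn
  · exact i0.add i1.integrableOn

theorem levyI2_abs (hN : 1 ≤ N) (hs : s ∈ Ioo (0 : ℝ) (1 / 2)) (hg : H1 N g)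
    {u : EN N → ℝ} {r C : ℝ} {x : EN N} (hr : 0 < r)
    (h : ∀ z, r < ‖z‖ → |u (x + z) - u x| ≤ C) :
    |levyI2 N s g u r x| ≤ C * c2 N s g r := by
  rw [c2, ← integral_const_mul, ← Real.norm_eq_abs, levyI2]
  refine norm_integral_le_of_norm_le ((c2_integrable hN hs hg hr).const_mul C) ?_
  refine (ae_restrict_iff' (measSet_lt r)).2 (ae_of_all _ fun z hz => ?_)
  rw [norm_mul, Real.norm_eq_abs, Real.norm_of_nonneg (kernel_nonneg hs.1 hg z)]
  exact mul_le_mul_of_nonneg_right (h z hz) (kernel_nonneg hs.1 hg z)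

/-- The integrals over `ρ < ‖z‖ ≤ R` are ordered when the increments are, up to `C‖z‖`. -/
theorem levyI2_compare (hN : 1 ≤ N) (hs : s ∈ Ioo (0 : ℝ) (1 / 2)) (hg : H1 N g)
    {u w : EN N → ℝ} (hu : Continuous u) {M : ℝ} (hM : ∀ x, |u x| ≤ M)
    (hw : Continuous w) {M' : ℝ} (hM' : ∀ x, |w x| ≤ M')
    {ρ R C : ℝ} (hρ : 0 < ρ) (hρR : ρ ≤ R) (hC : 0 ≤ C) (x y : EN N)
    (h1 : ∀ z, ρ < ‖z‖ → ‖z‖ ≤ R → u (x + z) - u x ≤ w (y + z) - w y + C * ‖z‖) :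
    levyI2 N s g u ρ x - levyI2 N s g w ρ y
      ≤ levyI2 N s g u R x - levyI2 N s g w R y + C * c1 N s g R := by
  -- apply the previous bound to the function `z ↦ u (x + z) - w (y + z)`
  have hd : Continuous fun z => u (x + z) - w (y + z) := by fun_prop
  have hdM : ∀ z, |u (x + z) - w (y + z)| ≤ M + M' := fun z =>
    (abs_sub _ _).trans (add_le_add (hM _) (hM' _))
  have key := levyI2_far (s := s) (a := 0) (γ := 0) (C := C) hN hs hg hd hdM hd hdM hρ hρR hC 0 0
    (fun z h h' => by simp only [zero_add, add_zero]; linarith [h1 z h h'])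
    (fun z _ => by simp)
  have e : ∀ r, 0 < r → levyI2 N s g (fun z => u (x + z) - w (y + z)) r 0
      = levyI2 N s g u r x - levyI2 N s g w r y := fun r hr => by
    rw [levyI2, levyI2, levyI2, ← integral_sub (incr_integrable hN hs hg hu hM hr x)
      (incr_integrable hN hs hg hw hM' hr y)]
    congr 1
    ext z
    simp only [zero_add, add_zero]
    ring
  rw [e ρ hρ, e R (hρ.trans_le hρR)] at key
  linarith

theorem levyI1_neg (φ : EN N → ℝ) (r : ℝ) (x : EN N) :
    levyI1 N s g (fun x => -φ x) r x = -levyI1 N s g φ r x := by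
  have : fderiv ℝ (fun x => -φ x) x = -fderiv ℝ φ x := fderiv_neg
  rw [levyI1, levyI1, ← integral_neg, this]
  congr 1
  ext z
  simp only [neg_apply]
  ring

theorem levyI2_neg (φ : EN N → ℝ) (r : ℝ) (x : EN N) :
    levyI2 N s g (fun x => -φ x) r x = -levyI2 N s g φ r x := by
  rw [levyI2, levyI2, ← integral_neg]
  congr 1
  ext z
  ring

end Operators

/-! ### Viscosity inequalities -/

section Viscosity

variable {N : ℕ} {s : ℝ} {g : EN N → ℝ}

/-- The test-function part of the notion of subsolution, for a right-hand side that does not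
depend on the gradient. -/
def ViscSub (N : ℕ) (s : ℝ) (g : EN N → ℝ) (F : ℝ → EN N → ℝ → ℝ → ℝ) (u : ℝ → EN N → ℝ) : Prop :=
  ∀ (t₀ : ℝ) (x₀ : EN N), 0 < t₀ →
    ∀ (φ : ℝ → EN N → ℝ), ContDiff ℝ 2 (fun q : ℝ × EN N => φ q.1 q.2) →
    ∀ τ r : ℝ, 0 < τ → τ < t₀ → 0 < r →
    (∀ t x, t ∈ Ioo (t₀ - τ) (t₀ + τ) → x ∈ ball x₀ r →
      u t x - φ t x ≤ u t₀ x₀ - φ t₀ x₀) →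
    deriv (fun t => φ t x₀) t₀ ≤
      F t₀ x₀ (u t₀ x₀) (levyI1 N s g (φ t₀) r x₀ + levyI2 N s g (u t₀) r x₀)

/-- The test-function part of the notion of supersolution, for a right-hand side that does not
depend on the gradient. -/
def ViscSup (N : ℕ) (s : ℝ) (g : EN N → ℝ) (F : ℝ → EN N → ℝ → ℝ → ℝ) (u : ℝ → EN N → ℝ) : Prop :=
  ∀ (t₀ : ℝ) (x₀ : EN N), 0 < t₀ →
    ∀ (φ : ℝ → EN N → ℝ), ContDiff ℝ 2 (fun q : ℝ × EN N => φ q.1 q.2) →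
    ∀ τ r : ℝ, 0 < τ → τ < t₀ → 0 < r →
    (∀ t x, t ∈ Ioo (t₀ - τ) (t₀ + τ) → x ∈ ball x₀ r →
      u t₀ x₀ - φ t₀ x₀ ≤ u t x - φ t x) →
    F t₀ x₀ (u t₀ x₀) (levyI1 N s g (φ t₀) r x₀ + levyI2 N s g (u t₀) r x₀)
      ≤ deriv (fun t => φ t x₀) t₀

theorem ViscSub.neg {F : ℝ → EN N → ℝ → ℝ → ℝ} {u : ℝ → EN N → ℝ} (h : ViscSub N s g F u) :
    ViscSup N s g (fun t x v I => -F t x (-v) (-I)) (fun t x => -u t x) := by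
  intro t₀ x₀ ht φ hφ τ r hτ hτt hr hmin
  have := h t₀ x₀ ht (fun t x => -φ t x) hφ.neg τ r hτ hτt hr
    (fun t x ht hx => by linarith [hmin t x ht hx])
  rw [levyI1_neg, deriv.fun_neg] at this
  have e : -(levyI1 N s g (φ t₀) r x₀ + levyI2 N s g (fun x => -u t₀ x) r x₀)
      = -levyI1 N s g (φ t₀) r x₀ + levyI2 N s g (u t₀) r x₀ := by
    rw [levyI2_neg]; ring
  simp only [e, neg_neg]
  linarith

theorem ViscSup.neg {F : ℝ → EN N → ℝ → ℝ → ℝ} {u : ℝ → EN N → ℝ} (h : ViscSup N s g F u) :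
    ViscSub N s g (fun t x v I => -F t x (-v) (-I)) (fun t x => -u t x) := by
  intro t₀ x₀ ht φ hφ τ r hτ hτt hr hmin
  have := h t₀ x₀ ht (fun t x => -φ t x) hφ.neg τ r hτ hτt hr
    (fun t x ht hx => by linarith [hmin t x ht hx])
  rw [levyI1_neg, deriv.fun_neg] at this
  have e : -(levyI1 N s g (φ t₀) r x₀ + levyI2 N s g (fun x => -u t₀ x) r x₀)
      = -levyI1 N s g (φ t₀) r x₀ + levyI2 N s g (u t₀) r x₀ := by
    rw [levyI2_neg]; ring
  simp only [e, neg_neg]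
  linarith

theorem ViscSub.test {F : ℝ → EN N → ℝ → ℝ → ℝ} {u : ℝ → EN N → ℝ} (h : ViscSub N s g F u)
    {T t₀ : ℝ} {x₀ : EN N} (h0 : 0 < t₀) (hT : t₀ < T) {φ : ℝ → EN N → ℝ}
    (hφ : ContDiff ℝ 2 (fun q : ℝ × EN N => φ q.1 q.2)) {r : ℝ} (hr : 0 < r)
    (hmax : ∀ t ∈ Icc 0 T, ∀ x ∈ ball x₀ r, u t x - φ t x ≤ u t₀ x₀ - φ t₀ x₀)
    {D : ℝ} (hD : HasDerivAt (fun t => φ t x₀) D t₀) :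
    D ≤ F t₀ x₀ (u t₀ x₀) (levyI1 N s g (φ t₀) r x₀ + levyI2 N s g (u t₀) r x₀) := by
  have hm : 0 < min t₀ (T - t₀) := lt_min h0 (by linarith)
  have := h t₀ x₀ h0 φ hφ (min t₀ (T - t₀) / 2) r (by linarith)
    (by linarith [min_le_left t₀ (T - t₀)]) hr (fun t x ht hx => hmax t ⟨?_, ?_⟩ x hx)
  · rwa [hD.deriv] at this
  · linarith [ht.1, min_le_left t₀ (T - t₀)]
  · linarith [ht.2, min_le_right t₀ (T - t₀)]

theorem ViscSup.test {F : ℝ → EN N → ℝ → ℝ → ℝ} {u : ℝ → EN N → ℝ} (h : ViscSup N s g F u)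
    {T t₀ : ℝ} {x₀ : EN N} (h0 : 0 < t₀) (hT : t₀ < T) {φ : ℝ → EN N → ℝ}
    (hφ : ContDiff ℝ 2 (fun q : ℝ × EN N => φ q.1 q.2)) {r : ℝ} (hr : 0 < r)
    (hmin : ∀ t ∈ Icc 0 T, ∀ x ∈ ball x₀ r, u t₀ x₀ - φ t₀ x₀ ≤ u t x - φ t x)
    {D : ℝ} (hD : HasDerivAt (fun t => φ t x₀) D t₀) :
    F t₀ x₀ (u t₀ x₀) (levyI1 N s g (φ t₀) r x₀ + levyI2 N s g (u t₀) r x₀) ≤ D := by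
  have hm : 0 < min t₀ (T - t₀) := lt_min h0 (by linarith)
  have := h t₀ x₀ h0 φ hφ (min t₀ (T - t₀) / 2) r (by linarith)
    (by linarith [min_le_left t₀ (T - t₀)]) hr (fun t x ht hx => hmin t ⟨?_, ?_⟩ x hx)
  · rwa [hD.deriv] at this
  · linarith [ht.1, min_le_left t₀ (T - t₀)]
  · linarith [ht.2, min_le_right t₀ (T - t₀)]

/-- The change of unknown `v(τ,y) = ε^{-2s} U(ε^{2s}(τ+n), ε(y+k)) - m` turns subsolutions of the
oscillating equation into subsolutions of the unscaled one; `n`, `k`, `m` are periods of the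
coefficients. -/
theorem ViscSub.scale {f : ℝ → ℝ} {σ : ℝ → EN N → ℝ} {U : ℝ → EN N → ℝ} {ε : ℝ} (hε : 0 < ε)
    (hU : ViscSub N s g
      (fun t x v I => I - f (v / ε ^ (2*s)) + σ (t / ε ^ (2*s)) (ε⁻¹ • x)) U)
    {n m : ℝ} {k : EN N} (hn0 : 0 ≤ n) (hn : ∀ t x, σ (t + n) x = σ t x)
    (hk : ∀ t x, σ t (x + k) = σ t x) (hm : ∀ v, f (v + m) = f v) :
    ViscSub N s g (fun τ y v I => I - f v + σ τ y)
      (fun τ y => (ε ^ (2*s))⁻¹ * U (ε ^ (2*s) * (τ + n)) (ε • (y + k)) - m) := by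
  intro τ₀ y₀ hτ₀ φ hφ τ r hτ hττ hr hmax
  set h := ε ^ (2*s) with hh
  have hpos : 0 < h := Real.rpow_pos_of_pos hε _
  set Φ : ℝ → EN N → ℝ := fun t x => h * (φ (h⁻¹ * t - n) (ε⁻¹ • x - k) + m) with hΦ
  have hΦc : ContDiff ℝ 2 (fun q : ℝ × EN N => Φ q.1 q.2) := by
    have : ContDiff ℝ 2 (fun q : ℝ × EN N => (h⁻¹ * q.1 - n, ε⁻¹ • q.2 - k)) := by fun_prop
    exact contDiff_const.mul ((hφ.comp this).add contDiff_const)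
  have et : h⁻¹ * (h * (τ₀ + n)) - n = τ₀ := by field_simp; ring
  have ex : ε⁻¹ • (ε • (y₀ + k)) - k = y₀ := by rw [inv_smul_smul₀ hε.ne']; abel
  have key := hU (h * (τ₀ + n)) (ε • (y₀ + k)) (by positivity) Φ hΦc (h * τ) (ε * r)
    (by positivity) (by nlinarith) (by positivity) (fun t x ht hx => ?_)
  · have hd : deriv (fun t => Φ t (ε • (y₀ + k))) (h * (τ₀ + n)) = deriv (fun t => φ t y₀) τ₀ := by
      have hφd : DifferentiableAt ℝ (fun t => φ t y₀) τ₀ := by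
        have : ContDiff ℝ 2 (fun t : ℝ => φ t y₀) :=
          hφ.comp (f := fun t : ℝ => (t, y₀)) (by fun_prop)
        exact this.differentiable (by norm_num) τ₀
      have h1 : HasDerivAt (fun t => h⁻¹ * t - n) h⁻¹ (h * (τ₀ + n)) := by
        simpa using ((hasDerivAt_id (h * (τ₀ + n))).const_mul h⁻¹).sub_const n
      have h2 : HasDerivAt (fun t => φ t y₀) (deriv (fun t => φ t y₀) τ₀)
          (h⁻¹ * (h * (τ₀ + n)) - n) := by rw [et]; exact hφd.hasDerivAt
      have h3 := (((h2.comp (h * (τ₀ + n)) h1).add_const m).const_mul h).deriv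
      simp only [hΦ, ex]
      simp only [Function.comp_def] at h3
      rw [h3]; field_simp
    have hI1 : levyI1 N s g (Φ (h * (τ₀ + n))) (ε * r) (ε • (y₀ + k))
        = levyI1 N s g (φ τ₀) r y₀ := by
      have hφd : DifferentiableAt ℝ (φ τ₀) y₀ := by
        have : ContDiff ℝ 2 (fun y => φ τ₀ y) :=
          hφ.comp (f := fun y : EN N => (τ₀, y)) (by fun_prop)
        exact this.differentiable (by norm_num) y₀
      have h1 : HasFDerivAt (fun x : EN N => ε⁻¹ • x - k)
          (ε⁻¹ • ContinuousLinearMap.id ℝ (EN N)) (ε • (y₀ + k)) :=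
        ((hasFDerivAt_id _).const_smul ε⁻¹).sub_const k
      have h2 : HasFDerivAt (φ τ₀) (fderiv ℝ (φ τ₀) y₀) (ε⁻¹ • (ε • (y₀ + k)) - k) := by
        rw [ex]; exact hφd.hasFDerivAt
      have h3 := (((h2.comp (ε • (y₀ + k)) h1).add_const m).const_mul h).fderiv
      have h4 : fderiv ℝ (Φ (h * (τ₀ + n))) (ε • (y₀ + k)) =
          h • (fderiv ℝ (φ τ₀) y₀ ∘L (ε⁻¹ • ContinuousLinearMap.id ℝ (EN N))) := by
        rw [← h3]
        simp only [hΦ, et, Function.comp_def]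
      have sc := kernel_integral_scale (s := s) (g := g) hε {z : EN N | ‖z‖ ≤ ε * r}
        (measSet_le _) (fun Z => Φ (h * (τ₀ + n)) (ε • (y₀ + k) + Z) -
          Φ (h * (τ₀ + n)) (ε • (y₀ + k)) - fderiv ℝ (Φ (h * (τ₀ + n))) (ε • (y₀ + k)) Z)
      have e : {z : EN N | ε • z ∈ {z : EN N | ‖z‖ ≤ ε * r}} = {z : EN N | ‖z‖ ≤ r} := by
        ext z
        simp only [mem_ofPred_eq, norm_smul, Real.norm_of_nonneg hε.le]
        constructor <;> intro h <;> nlinarith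
      rw [e, ← hh] at sc
      have : h * levyI1 N s g (φ τ₀) r y₀
          = h * levyI1 N s g (Φ (h * (τ₀ + n))) (ε * r) (ε • (y₀ + k)) := by
        rw [levyI1, levyI1, ← sc, ← integral_const_mul]
        congr 1
        ext z
        rw [h4]
        have e2 : ε⁻¹ • (ε • (y₀ + k) + ε • z) - k = y₀ + z := by
          rw [← smul_add, inv_smul_smul₀ hε.ne']; abel
        simp only [hΦ, et, e2, add_sub_cancel_right, smul_apply, ContinuousLinearMap.comp_apply,
          ContinuousLinearMap.id_apply, inv_smul_smul₀ hε.ne', smul_eq_mul]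
        ring
      exact (mul_left_cancel₀ hpos.ne' this).symm
    have hI2 : levyI2 N s g (fun y => h⁻¹ * U (h * (τ₀ + n)) (ε • (y + k)) - m) r y₀
        = levyI2 N s g (U (h * (τ₀ + n))) (ε * r) (ε • (y₀ + k)) := by
      rw [levyI2_scale hε (U (h * (τ₀ + n))) r (ε • y₀) y₀ rfl, ← hh, inv_mul_cancel₀ hpos.ne',
        one_mul, smul_add]
    have e3 : ε⁻¹ • ε • (y₀ + k) = y₀ + k := inv_smul_smul₀ hε.ne' _
    have e4 : h * (τ₀ + n) / h = τ₀ + n := by field_simp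
    have e5 : f (U (h * (τ₀ + n)) (ε • (y₀ + k)) / h)
        = f (h⁻¹ * U (h * (τ₀ + n)) (ε • (y₀ + k)) - m) := by
      rw [← hm (h⁻¹ * U (h * (τ₀ + n)) (ε • (y₀ + k)) - m), sub_add_cancel, div_eq_inv_mul]
    rw [hd, hI1] at key
    simp only [e3, e4, e5, hn, hk] at key
    rw [← hI2] at key
    exact key
  · have h1 := hmax (h⁻¹ * t - n) (ε⁻¹ • x - k) ⟨?_, ?_⟩ ?_
    · have e1 : h * (h⁻¹ * t - n + n) = t := by field_simp; ring
      have e2 : ε • (ε⁻¹ • x - k + k) = x := by rw [sub_add_cancel, smul_inv_smul₀ hε.ne']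
      simp only [e1, e2] at h1
      have h2 := mul_le_mul_of_nonneg_left h1 hpos.le
      have c : ∀ a b : ℝ, h * (h⁻¹ * a - m - b) = a - h * (b + m) := fun a b => by
        field_simp; ring
      rw [c, c] at h2
      simpa only [hΦ, et, ex] using h2
    · have := ht.1
      have : h * (h⁻¹ * t) = t := by field_simp
      nlinarith
    · have := ht.2
      have : h * (h⁻¹ * t) = t := by field_simp
      nlinarith
    · rw [mem_ball, dist_eq_norm] at hx ⊢
      have e2 : x - ε • (y₀ + k) = ε • (ε⁻¹ • x - k - y₀) := by
        rw [smul_sub, smul_sub, smul_inv_smul₀ hε.ne', smul_add]; abel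
      rw [e2, norm_smul, Real.norm_of_nonneg hε.le] at hx
      exact lt_of_mul_lt_mul_left hx hε.le

end Viscosity

/-! ### Cutoff functions and attained maxima -/

section Cutoffs

/-- A smooth function with values in `[0,1]`, equal to `1` at the origin and supported in the
unit ball, together with a Lipschitz constant. -/
structure IsBump {N : ℕ} (χ : EN N → ℝ) (K : ℝ) : Prop where
  smooth : ContDiff ℝ 2 χ
  one : χ 0 = 1
  nonneg : ∀ x, 0 ≤ χ x
  le_one : ∀ x, χ x ≤ 1
  zero : ∀ x, 1 ≤ ‖x‖ → χ x = 0
  knonneg : 0 ≤ K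
  lip : ∀ x y, |χ x - χ y| ≤ K * ‖x - y‖

/-- A smooth nondecreasing step from `0` (on `t ≤ 0`) to `1` (on `t ≥ 1`), together with a
Lipschitz constant. -/
structure IsStep (S : ℝ → ℝ) (K : ℝ) : Prop where
  smooth : ContDiff ℝ 2 S
  mono : Monotone S
  zero : ∀ t, t ≤ 0 → S t = 0
  one : ∀ t, 1 ≤ t → S t = 1
  knonneg : 0 ≤ K
  lip : ∀ x y, |S x - S y| ≤ K * |x - y|

theorem IsStep.nonneg {S : ℝ → ℝ} {K : ℝ} (h : IsStep S K) (t : ℝ) : 0 ≤ S t := by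
  rcases le_total t 0 with h0 | h0
  · rw [h.zero t h0]
  · rw [← h.zero 0 le_rfl]; exact h.mono h0

theorem IsStep.deriv_nonneg {S : ℝ → ℝ} {K : ℝ} (h : IsStep S K) (t : ℝ) : 0 ≤ deriv S t :=
  h.mono.deriv_nonneg

theorem IsStep.hasDerivAt {S : ℝ → ℝ} {K : ℝ} (h : IsStep S K) (T t : ℝ) :
    HasDerivAt (fun t => S (t - T)) (deriv S (t - T)) t := by
  have := ((h.smooth.differentiable (by norm_num)) (t - T)).hasDerivAt
  exact this.comp_sub_const t T

theorem lipschitz_of_compactSupport {E : Type*} [NormedAddCommGroup E] [NormedSpace ℝ E]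
    {f : E → ℝ} (hf : ContDiff ℝ 2 f) (hc : HasCompactSupport f) :
    ∃ K : ℝ, 0 ≤ K ∧ ∀ x y, |f x - f y| ≤ K * ‖x - y‖ := by
  obtain ⟨K, hK⟩ := (hf.of_le (by norm_num : (1 : WithTop ℕ∞) ≤ 2)).lipschitzWith_of_hasCompactSupport
    hc (by norm_num)
  exact ⟨K, K.2, fun x y => by simpa [Real.dist_eq, dist_eq_norm] using hK.dist_le_mul x y⟩

theorem exists_bump (N : ℕ) : ∃ (χ : EN N → ℝ) (K : ℝ), IsBump χ K := by
  let f : ContDiffBump (0 : EN N) := ⟨1 / 2, 1, by norm_num, by norm_num⟩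
  have hf : ContDiff ℝ 2 (f : EN N → ℝ) := f.contDiff
  obtain ⟨K, hK, hlip⟩ := lipschitz_of_compactSupport hf f.hasCompactSupport
  refine ⟨f, K, hf, ?_, fun x => f.nonneg, fun x => f.le_one, fun x hx => ?_, hK, hlip⟩
  · exact f.one_of_mem_closedBall (by simp [f])
  · exact f.zero_of_le_dist (by simpa [f] using hx)

theorem exists_step : ∃ (S : ℝ → ℝ) (K : ℝ), IsStep S K := by
  have hS : ContDiff ℝ 2 Real.smoothTransition := Real.smoothTransition.contDiff
  have hd : Continuous (deriv Real.smoothTransition) :=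
    hS.continuous_deriv (by norm_num)
  obtain ⟨K, hK⟩ := (isCompact_Icc (a := (0:ℝ)) (b := 1)).exists_bound_of_continuousOn hd.continuousOn
  have hK0 : 0 ≤ K := (norm_nonneg _).trans (hK 0 (by simp))
  have hmono : Monotone Real.smoothTransition := Real.smoothTransition.monotone
  have hb : ∀ t, ‖deriv Real.smoothTransition t‖ ≤ K := by
    intro t
    by_cases ht : t ∈ Icc (0 : ℝ) 1
    · exact hK t ht
    · have : deriv Real.smoothTransition t = 0 := by
        rcases lt_or_ge t 0 with h | h
        · have : Real.smoothTransition =ᶠ[nhds t] fun _ => 0 := by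
            filter_upwards [Iio_mem_nhds h] with x hx
            exact Real.smoothTransition.zero_of_nonpos (le_of_lt hx)
          rw [this.deriv_eq]; simp
        · have h1 : 1 < t := by
            by_contra h2
            exact ht ⟨h, not_lt.1 h2⟩
          have : Real.smoothTransition =ᶠ[nhds t] fun _ => 1 := by
            filter_upwards [Ioi_mem_nhds h1] with x hx
            exact Real.smoothTransition.one_of_one_le (le_of_lt hx)
          rw [this.deriv_eq]; simp
      rw [this]; simpa using hK0
  refine ⟨Real.smoothTransition, K, hS, hmono,
    fun t => Real.smoothTransition.zero_of_nonpos, fun t => Real.smoothTransition.one_of_one_le,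
    hK0, fun x y => ?_⟩
  have := Convex.norm_image_sub_le_of_norm_deriv_le (f := Real.smoothTransition) (s := univ)
    (x := y) (y := x) (fun x _ => hS.differentiable (by norm_num) x) (fun x _ => hb x) convex_univ
    trivial trivial
  simpa [Real.norm_eq_abs] using this

/-- A function that is bounded above attains its maximum after adding a small bump centred at an
almost-maximum point. -/
theorem exists_max_perturbed {X : Type*} [TopologicalSpace X] {K : Set X} {Ψ : X → ℝ}
    (hΨ : ContinuousOn Ψ K) {M : ℝ} (hM : ∀ p ∈ K, Ψ p ≤ M) {θ : X → X → ℝ}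
    (hθc : ∀ p, Continuous (θ p)) (hθ1 : ∀ p q, θ p q ≤ 1)
    (hθ : ∀ p, θ p p = 1) {γ : ℝ} (hγ : 0 < γ) {p₁ : X} (hp₁ : p₁ ∈ K)
    (hC : ∀ p ∈ K, ∃ C, IsCompact C ∧ C ⊆ K ∧
      ∀ q ∈ K, q ∉ C → θ p q = 0 ∨ Ψ q + γ < Ψ p₁) :
    ∃ p ∈ K, ∃ q ∈ K, (∀ q' ∈ K, Ψ q' + γ * θ p q' ≤ Ψ q + γ * θ p q) ∧
      Ψ p₁ ≤ Ψ q + γ * θ p q := by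
  have hb : BddAbove (Ψ '' K) := ⟨M, by rintro _ ⟨p, hp, rfl⟩; exact hM p hp⟩
  have hle : ∀ p ∈ K, Ψ p ≤ sSup (Ψ '' K) := fun p hp => le_csSup hb ⟨p, hp, rfl⟩
  obtain ⟨p, hp, hp1, hp2⟩ : ∃ p ∈ K, Ψ p₁ ≤ Ψ p ∧ sSup (Ψ '' K) ≤ Ψ p + γ / 2 := by
    obtain ⟨_, ⟨p, hp, rfl⟩, h⟩ := exists_lt_of_lt_csSup (⟨_, p₁, hp₁, rfl⟩ : (Ψ '' K).Nonempty)
      (show sSup (Ψ '' K) - γ / 2 < sSup (Ψ '' K) by linarith)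
    rcases le_total (Ψ p₁) (Ψ p) with h1 | h1
    · exact ⟨p, hp, h1, by linarith⟩
    · exact ⟨p₁, hp₁, le_rfl, by linarith⟩
  obtain ⟨C, hCc, hCK, hCo⟩ := hC p hp
  have hpC : p ∈ C := by
    by_contra h
    rcases hCo p hp h with h | h
    · rw [hθ] at h; norm_num at h
    · linarith
  obtain ⟨q, hq, hmax⟩ := hCc.exists_isMaxOn ⟨p, hpC⟩
    ((hΨ.mono hCK).add ((hθc p).continuousOn.const_mul γ) :
      ContinuousOn (fun q => Ψ q + γ * θ p q) C)
  have hpq : Ψ p + γ ≤ Ψ q + γ * θ p q := by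
    have := hmax hpC
    simpa [hθ] using this
  refine ⟨p, hp, q, hCK hq, fun q' hq' => ?_, by linarith⟩
  by_cases h : q' ∈ C
  · exact hmax h
  · rcases hCo q' hq' h with h | h
    · rw [h]; linarith [hle q' hq']
    · nlinarith [hθ1 p q']

end Cutoffs

section Barrier

variable {N : ℕ} {s : ℝ} {g : EN N → ℝ}

/-- Continuity on `[0,∞) × ℝ^N` and boundedness on `[0,T] × ℝ^N` for every `T`. -/
structure Reg (N : ℕ) (u : ℝ → EN N → ℝ) : Prop where
  cont : ContinuousOn (fun q : ℝ × EN N => u q.1 q.2) (Ici 0 ×ˢ univ)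
  bdd : ∀ T, ∃ M, ∀ t ∈ Icc (0 : ℝ) T, ∀ x, |u t x| ≤ M

theorem Reg.neg {u : ℝ → EN N → ℝ} (h : Reg N u) : Reg N (fun t x => -u t x) :=
  ⟨h.cont.neg, fun T => by simpa using h.bdd T⟩

theorem Reg.slice {u : ℝ → EN N → ℝ} (h : Reg N u) {t : ℝ} (ht : 0 ≤ t) : Continuous (u t) := by
  have := h.cont.comp (f := fun x : EN N => (t, x)) (s := univ) (by fun_prop)
    (fun x _ => ⟨ht, trivial⟩)
  exact continuousOn_univ.1 this

/-- Linear-in-time lower barrier for supersolutions, when the right-hand side is at least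
`I_s[u] - C`. -/
theorem ViscSup.barrier (hN : 1 ≤ N) (hs : s ∈ Ioo (0 : ℝ) (1 / 2)) (hg : H1 N g)
    {F : ℝ → EN N → ℝ → ℝ → ℝ} {C : ℝ} (hF : ∀ t x v I, I - C ≤ F t x v I)
    {u : ℝ → EN N → ℝ} (hu : ViscSup N s g F u) (hreg : Reg N u)
    {u₀ : EN N → ℝ} (hu₀ : ContDiff ℝ 2 u₀) {M₀ : ℝ} (hM₀ : ∀ x, |u₀ x| ≤ M₀)
    (hlip : ∀ x, ‖fderiv ℝ u₀ x‖ ≤ M₀)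
    (hinit : ∀ x, u₀ x ≤ u 0 x) :
    ∀ t, 0 ≤ t → ∀ x, u₀ x - (C + 2 * M₀ * (c1 N s g 1 + c2 N s g 1)) * t ≤ u t x := by
  obtain ⟨χ, Kχ, hχ⟩ := exists_bump N
  obtain ⟨S, KS, hS⟩ := exists_step
  set K1 := C + 2 * M₀ * (c1 N s g 1 + c2 N s g 1) with hK1
  have hM₀0 : 0 ≤ M₀ := (abs_nonneg _).trans (hM₀ 0)
  have hc1 := c1_nonneg hs.1 hg 1
  have hc2 := c2_nonneg hs.1 hg 1
  suffices H : ∀ κ > 0, ∀ t, 0 ≤ t → ∀ x, u₀ x - (K1 + κ) * t ≤ u t x by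
    intro t ht x
    refine le_of_forall_pos_le_add fun e he => ?_
    have := H (e / (t + 1)) (by positivity) t ht x
    have h2 : e / (t + 1) * t ≤ e := by
      rw [div_mul_eq_mul_div, div_le_iff₀ (by linarith)]; nlinarith
    nlinarith
  intro κ hκ t₁ ht₁ x₁
  by_contra hcon
  push Not at hcon
  set T := t₁ with hT
  obtain ⟨M, hM⟩ := hreg.bdd (T + 2)
  have hM0 : 0 ≤ M := (abs_nonneg _).trans (hM 0 ⟨le_rfl, by linarith⟩ 0)
  set A := M₀ + M + |K1 + κ| * (T + 2) with hA
  have hA0 : 0 ≤ A := by positivity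
  set Ψ : ℝ × EN N → ℝ := fun q => u₀ q.2 - (K1 + κ) * q.1 - A * S (q.1 - T) - u q.1 q.2 with hΨ
  set η := u₀ x₁ - (K1 + κ) * t₁ - u t₁ x₁ with hη
  have hη0 : 0 < η := by linarith
  obtain ⟨γ, hγ0, hγη, hγκ⟩ : ∃ γ > 0, γ < η ∧ γ * (2 * Kχ * c1 N s g 1 + c2 N s g 1) < κ := by
    have hd : 0 ≤ 2 * Kχ * c1 N s g 1 + c2 N s g 1 := by have := hχ.knonneg; positivity
    refine ⟨min (η / 2) (κ / (2 * Kχ * c1 N s g 1 + c2 N s g 1 + 1)), by positivity,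
      (min_le_left _ _).trans_lt (by linarith), ?_⟩
    refine (mul_le_mul_of_nonneg_right (min_le_right _ _) hd).trans_lt ?_
    rw [div_mul_eq_mul_div, div_lt_iff₀ (by linarith)]; nlinarith
  have hΨc : ContinuousOn Ψ (Icc 0 (T + 2) ×ˢ univ) := by
    have h1 : ContinuousOn (fun q : ℝ × EN N => u q.1 q.2) (Icc 0 (T + 2) ×ˢ univ) :=
      hreg.cont.mono (prod_mono Icc_subset_Ici_self le_rfl)
    have h2 : Continuous fun q : ℝ × EN N => u₀ q.2 - (K1 + κ) * q.1 - A * S (q.1 - T) := by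
      have := hu₀.continuous
      have := hS.smooth.continuous
      fun_prop
    exact h2.continuousOn.sub h1
  have hΨ1 : Ψ (t₁, x₁) = η := by
    simp only [hΨ, hT, sub_self, hS.zero 0 le_rfl, hη]; ring
  have hΨM : ∀ q ∈ Icc 0 (T + 2) ×ˢ univ, Ψ q ≤ M₀ + |K1 + κ| * (T + 2) + M := by
    rintro ⟨t, x⟩ ⟨ht, -⟩
    have h1 := (abs_le.1 (hM₀ x)).2
    have h2 := (abs_le.1 (hM t ht x)).1
    have h3 : -(K1 + κ) * t ≤ |K1 + κ| * (T + 2) :=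
      mul_le_mul (neg_le_abs _) ht.2 ht.1 (abs_nonneg _)
    have h4 := mul_nonneg hA0 (hS.nonneg (t - T))
    simp only [hΨ]
    linarith
  have hχc := hχ.smooth.continuous
  obtain ⟨p, hp, ⟨t₀, x₀⟩, hq, hmax, hge⟩ := exists_max_perturbed
    (θ := fun p q : ℝ × EN N => χ (q.2 - p.2)) hΨc hΨM (fun p => by fun_prop)
    (fun p q => hχ.le_one _)
    (fun p => by simp [hχ.one]) hγ0 (p₁ := (t₁, x₁)) ⟨⟨ht₁, by linarith⟩, trivial⟩ (by
      rintro ⟨t, x⟩ -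
      refine ⟨Icc 0 (T + 2) ×ˢ closedBall x 1, isCompact_Icc.prod (isCompact_closedBall _ _),
        prod_mono le_rfl (subset_univ _), ?_⟩
      rintro ⟨t', x'⟩ ⟨h1, -⟩ h2
      left
      apply hχ.zero
      by_contra h3
      exact h2 ⟨h1, by rw [mem_closedBall, dist_eq_norm]; exact (not_le.1 h3).le⟩)
  simp only [hΨ1, Prod.forall] at hge hmax
  have ht₀ : t₀ ∈ Icc 0 (T + 2) := hq.1
  have hγχ : γ * χ (x₀ - p.2) ≤ γ := by nlinarith [hχ.le_one (x₀ - p.2)]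
  have hpos : 0 < t₀ := by
    rcases ht₀.1.lt_or_eq with h | h
    · exact h
    · exfalso
      have h1 := hinit x₀
      simp only [hΨ, ← h] at hge
      rw [hS.zero (0 - T) (by linarith)] at hge
      linarith
  have hlt : t₀ < T + 2 := by
    by_contra h
    have h' : t₀ = T + 2 := le_antisymm ht₀.2 (not_lt.1 h)
    have h1 := (abs_le.1 (hM₀ x₀)).2
    have h2 := (abs_le.1 (hM t₀ ht₀ x₀)).1
    have h3 : -(K1 + κ) * t₀ ≤ |K1 + κ| * (T + 2) :=
      mul_le_mul (neg_le_abs _) ht₀.2 ht₀.1 (abs_nonneg _)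
    simp only [hΨ] at hge
    rw [hS.one (t₀ - T) (by linarith)] at hge
    linarith
  set φ : ℝ → EN N → ℝ := fun t x => u₀ x - (K1 + κ) * t - A * S (t - T) + γ * χ (x - p.2) with hφ
  have hφc : ContDiff ℝ 2 (fun q : ℝ × EN N => φ q.1 q.2) := by
    have := hS.smooth
    have := hχ.smooth
    simp only [hφ]
    fun_prop
  have hincr : ∀ t ∈ Icc 0 (T + 2), ∀ x, u t₀ x₀ - φ t₀ x₀ ≤ u t x - φ t x := fun t ht x => by
    have := hmax t x ⟨ht, trivial⟩
    simp only [hΨ] at this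
    simp only [hφ]
    linarith
  have hD : HasDerivAt (fun t => φ t x₀) (-(K1 + κ) - A * deriv S (t₀ - T)) t₀ := by
    have h1 : HasDerivAt (fun t => (K1 + κ) * t) ((K1 + κ) * 1) t₀ :=
      (hasDerivAt_id' t₀).const_mul _
    have h2 := (((hasDerivAt_const t₀ (u₀ x₀)).sub h1).sub
      ((hS.hasDerivAt T t₀).const_mul A)).add_const (γ * χ (x₀ - p.2))
    exact h2.congr_deriv (by ring)
  have key := hu.test hpos hlt hφc zero_lt_one (fun t ht x _ => hincr t ht x) hD
  have key2 := hF t₀ x₀ (u t₀ x₀) (levyI1 N s g (φ t₀) 1 x₀ + levyI2 N s g (u t₀) 1 x₀)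
  have hφd : ∀ x, DifferentiableAt ℝ (φ t₀) x := fun x => by
    have : ContDiff ℝ 2 (φ t₀) := hφc.comp (f := fun x : EN N => (t₀, x)) (by fun_prop)
    exact this.differentiable (by norm_num) x
  have hφlip : ∀ x y, ‖φ t₀ y - φ t₀ x‖ ≤ (M₀ + γ * Kχ) * ‖y - x‖ := fun x y => by
    have h1 := Convex.norm_image_sub_le_of_norm_fderiv_le (𝕜 := ℝ) (f := u₀) (s := univ)
      (x := x) (y := y) (fun x _ => hu₀.differentiable (by norm_num) x) (fun x _ => hlip x)
      convex_univ trivial trivial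
    have h2 := hχ.lip (y - p.2) (x - p.2)
    rw [sub_sub_sub_cancel_right] at h2
    have : φ t₀ y - φ t₀ x = (u₀ y - u₀ x) + γ * (χ (y - p.2) - χ (x - p.2)) := by
      simp only [hφ]; ring
    rw [this]
    refine (norm_add_le _ _).trans ?_
    rw [norm_mul, Real.norm_of_nonneg hγ0.le, Real.norm_eq_abs (χ _ - _)]
    nlinarith
  have hfd : ‖fderiv ℝ (φ t₀) x₀‖ ≤ M₀ + γ * Kχ := by
    have hk := hχ.knonneg
    refine (hφd x₀).hasFDerivAt.le_of_lip' (by positivity) (Eventually.of_forall fun y => hφlip x₀ y)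
  have hI1 : |levyI1 N s g (φ t₀) 1 x₀| ≤ (2 * (M₀ + γ * Kχ)) * c1 N s g 1 := by
    refine levyI1_bound hN hs hg fun z _ => ?_
    have h1 := hφlip x₀ (x₀ + z)
    rw [add_sub_cancel_left] at h1
    have h2 := (fderiv ℝ (φ t₀) x₀).le_of_opNorm_le hfd z
    have h3 := abs_sub (φ t₀ (x₀ + z) - φ t₀ x₀) (fderiv ℝ (φ t₀) x₀ z)
    rw [Real.norm_eq_abs] at h1 h2
    linarith
  have hI2 : -levyI2 N s g (u t₀) 1 x₀ ≤ (2 * M₀ + γ) * c2 N s g 1 := by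
    have := levyI2_far (s := s) (g := g) (u := fun x => -u t₀ x) (w := fun _ => 0) (M := M)
      (M' := 0) (ρ := 1) (R := 1) (a := 2 * M₀ + γ) (C := 0) (γ := 0) hN hs hg
      (hreg.slice ht₀.1).neg (fun x => by rw [abs_neg]; exact hM t₀ ht₀ x)
      continuous_const (by simp) one_pos le_rfl le_rfl x₀ x₀ (fun z h1 h2 => by linarith)
      (fun z _ => by
        have h1 := hincr t₀ ht₀ (x₀ + z)
        have h2 := (abs_le.1 (hM₀ (x₀ + z))).1
        have h3 := (abs_le.1 (hM₀ x₀)).2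
        have h4 : 0 ≤ γ * χ (x₀ + z - p.2) := mul_nonneg hγ0.le (hχ.nonneg _)
        simp only [hφ] at h1
        linarith)
    rw [levyI2_neg] at this
    have h0 : levyI2 N s g (fun _ => 0) 1 x₀ = 0 := by simp [levyI2]
    rw [h0] at this
    linarith
  have hI1' := (abs_le.1 hI1).1
  have hS' := mul_nonneg hA0 (hS.deriv_nonneg (t₀ - T))
  nlinarith

end Barrier

/-! ### Doubling of variables and comparison for the cell problem -/

/-- Doubling of variables: if `G ≤ 0` on the diagonal and `G` vanishes somewhere on it, then the
penalized functions `G - n d` have maximum points converging to a diagonal zero of `G`. -/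
theorem doubling {X : Type*} [TopologicalSpace X] [FirstCountableTopology X] {Q : Set X}
    (hQ : IsCompact Q) {G d : X × X → ℝ} (hG : ContinuousOn G (Q ×ˢ Q))
    (hd : Continuous d) (hd0 : ∀ p, 0 ≤ d p) (hdiag : ∀ q, d (q, q) = 0)
    (hdeq : ∀ q q', d (q, q') = 0 → q = q')
    (hle : ∀ q ∈ Q, G (q, q) ≤ 0) {q₁ : X} (hq₁ : q₁ ∈ Q) (hG₁ : G (q₁, q₁) = 0) :
    ∃ q₀ ∈ Q, G (q₀, q₀) = 0 ∧ ∀ P : X × X → Prop,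
      (∀ᶠ p in nhdsWithin (q₀, q₀) (Q ×ˢ Q), P p) →
      ∃ n : ℝ, 0 ≤ n ∧ ∃ p ∈ Q ×ˢ Q, P p ∧
        (∀ p' ∈ Q ×ˢ Q, G p' - n * d p' ≤ G p - n * d p) ∧ 0 ≤ G p - n * d p := by
  have hc : IsCompact (Q ×ˢ Q) := hQ.prod hQ
  have hmax : ∀ n : ℕ, ∃ p ∈ Q ×ˢ Q, ∀ p' ∈ Q ×ˢ Q, G p' - n * d p' ≤ G p - n * d p := fun n =>
    hc.exists_isMaxOn ⟨(q₁, q₁), hq₁, hq₁⟩ (hG.sub (hd.continuousOn.const_mul (n : ℝ)))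
  choose p hp hpmax using hmax
  have hpos : ∀ n, 0 ≤ G (p n) - n * d (p n) := fun n => by
    have := hpmax n (q₁, q₁) ⟨hq₁, hq₁⟩
    rwa [hG₁, hdiag, mul_zero, sub_zero] at this
  obtain ⟨a, ha, ψ, hψ, hlim⟩ := hc.tendsto_subseq hp
  have hlimw : Tendsto (p ∘ ψ) atTop (nhdsWithin a (Q ×ˢ Q)) :=
    tendsto_nhdsWithin_iff.2 ⟨hlim, Eventually.of_forall fun n => hp _⟩
  have hGlim : Tendsto (fun n => G (p (ψ n))) atTop (nhds (G a)) := (hG a ha).tendsto.comp hlimw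
  have hdlim : Tendsto (fun n => d (p (ψ n))) atTop (nhds (d a)) := (hd.tendsto a).comp hlim
  have hψt : Tendsto (fun n => ((ψ n : ℕ) : ℝ)) atTop atTop :=
    tendsto_natCast_atTop_atTop.comp hψ.tendsto_atTop
  have hda : d a = 0 := by
    by_contra hne
    have hpos' : 0 < d a := lt_of_le_of_ne (hd0 a) (Ne.symm hne)
    have h1 : Tendsto (fun n => (ψ n : ℝ) * d (p (ψ n))) atTop atTop :=
      hψt.atTop_mul_pos hpos' hdlim
    have h2 : Tendsto (fun n => G (p (ψ n))) atTop atTop :=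
      tendsto_atTop_mono (fun n => by linarith [hpos (ψ n)]) h1
    exact not_tendsto_atTop_of_tendsto_nhds hGlim h2
  obtain ⟨q₀, q₀'⟩ := a
  obtain rfl := hdeq q₀ q₀' hda
  have hGa : 0 ≤ G (q₀, q₀) := ge_of_tendsto' hGlim fun n => by
    have := mul_nonneg (Nat.cast_nonneg (α := ℝ) (ψ n)) (hd0 (p (ψ n)))
    linarith [hpos (ψ n)]
  refine ⟨q₀, ha.1, le_antisymm (hle q₀ ha.1) hGa, fun P hP => ?_⟩
  obtain ⟨n, hn⟩ := (hlimw.eventually hP).exists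
  exact ⟨ψ n, Nat.cast_nonneg _, p (ψ n), hp _, hn, hpmax _, hpos _⟩

section Cell

variable {N : ℕ} {s : ℝ} {g : EN N → ℝ}

theorem hasDerivAt_sq_sub (n b t : ℝ) :
    HasDerivAt (fun t => n * ((t - b) ^ 2)) (2 * n * (t - b)) t := by
  have := (((hasDerivAt_id' t).sub_const b).pow 2).const_mul n
  exact this.congr_deriv (by simp; ring)

/-- The viscosity inequalities at a maximum point of the doubled function. -/
theorem cell_step (hN : 1 ≤ N) (hs : s ∈ Ioo (0 : ℝ) (1 / 2)) (hg : H1 N g)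
    {f : ℝ → ℝ} {K : ℝ} (hf : ∀ a b, |f a - f b| ≤ K * |a - b|)
    {σ : ℝ → EN N → ℝ} {v w : ℝ → EN N → ℝ} {L : ℝ}
    (hw : ViscSup N s g (fun τ y v I => I + L - f v + σ τ y) w) (hwr : Reg N w)
    (hv : ViscSub N s g (fun τ y v I => I - f v + σ τ y) v) (hvr : Reg N v)
    {T Θ n B r : ℝ} (hB : 0 ≤ B) (hr : 0 < r) {P : ℝ → EN N → ℝ}
    (hPc : ContDiff ℝ 2 (fun q : ℝ × EN N => P q.1 q.2)) {τ τ' : ℝ} {y y' y₀ : EN N}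
    (hΘ : 0 ≤ Θ + P τ y) (hPB : ∀ z, P τ (y + z) ≤ P τ y + B * ‖z‖) {P' : ℝ} (hP'0 : 0 ≤ P')
    (hP' : HasDerivAt (fun t => P t y) P' τ)
    (hτ0 : 0 < τ) (hτT : τ < T) (hτ'0 : 0 < τ') (hτ'T : τ' < T)
    (hy : ‖y - y₀‖ < r) (hy' : ‖y' - y₀‖ < r)
    (hpos : 0 ≤ v τ y - w τ' y' - Real.exp (K * τ) * (Θ + P τ y))
    (hmax : ∀ t ∈ Icc 0 T, ∀ x ∈ closedBall y₀ (2 * r), ∀ t' ∈ Icc 0 T, ∀ x' ∈ closedBall y₀ (2 * r),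
      v t x - w t' x' - Real.exp (K * t) * (Θ + P t x) - n * ((t - t') ^ 2 + ‖x - x'‖ ^ 2)
      ≤ v τ y - w τ' y' - Real.exp (K * τ) * (Θ + P τ y) - n * ((τ - τ') ^ 2 + ‖y - y'‖ ^ 2))
    {e : ℝ} (he : 0 < e) :
    L ≤ levyI2 N s g (v τ) r y - levyI2 N s g (w τ') r y' + Real.exp (K * τ) * B * c1 N s g r
      + K * (v τ y - w τ' y' - Real.exp (K * τ) * (Θ + P τ y)) + |σ τ y - σ τ' y'| + 2 * e := by
  have hτI : τ ∈ Icc 0 T := ⟨hτ0.le, hτT.le⟩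
  have hτ'I : τ' ∈ Icc 0 T := ⟨hτ'0.le, hτ'T.le⟩
  have hball : ∀ a : EN N, ‖a - y₀‖ < r → ∀ z : EN N, ‖z‖ ≤ r → a + z ∈ closedBall y₀ (2 * r) := by
    intro a ha z hz
    rw [mem_closedBall, dist_eq_norm, show a + z - y₀ = (a - y₀) + z by abel]
    linarith [norm_add_le (a - y₀) z]
  have hball' : ∀ a : EN N, ‖a - y₀‖ < r → ∀ x ∈ ball a r, x ∈ closedBall y₀ (2 * r) := by
    intro a ha x hx
    have := hball a ha (x - a) (by rw [← dist_eq_norm]; exact (mem_ball.1 hx).le)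
    rwa [add_sub_cancel] at this
  have hyI := hball' y hy y (mem_ball_self hr)
  have hy'I := hball' y' hy' y' (mem_ball_self hr)
  set φ : ℝ → EN N → ℝ := fun t x =>
    Real.exp (K * t) * (Θ + P t x) + n * ((t - τ') ^ 2) + n * ‖x - y'‖ ^ 2 with hφ
  set ψ : ℝ → EN N → ℝ := fun t x => -(n * ((t - τ) ^ 2)) - n * ‖x - y‖ ^ 2 with hψ
  have hnorm : ∀ b : EN N, ContDiff ℝ 2 fun x : ℝ × EN N => ‖x.2 - b‖ ^ 2 := fun b =>
    ContDiff.norm_sq ℝ (by fun_prop)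
  have hφc : ContDiff ℝ 2 (fun q : ℝ × EN N => φ q.1 q.2) := by
    have := hnorm y'
    simp only [hφ]
    fun_prop
  have hψc : ContDiff ℝ 2 (fun q : ℝ × EN N => ψ q.1 q.2) := by
    have := hnorm y
    simp only [hψ]
    fun_prop
  have hslice : ∀ (F : ℝ → EN N → ℝ), ContDiff ℝ 2 (fun q : ℝ × EN N => F q.1 q.2) →
      ∀ t x, DifferentiableAt ℝ (F t) x := fun F hF t x => by
    have : ContDiff ℝ 2 (F t) := hF.comp (f := fun x : EN N => (t, x)) (by fun_prop)
    exact this.differentiable (by norm_num) x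
  obtain ⟨ρ₁, hρ₁, h1⟩ := levyI1_small (s := s) hN hs hg (hslice φ hφc τ y) he
  obtain ⟨ρ₂, hρ₂, h2⟩ := levyI1_small (s := s) hN hs hg (hslice ψ hψc τ' y') he
  set ρ := min r (min ρ₁ ρ₂) with hρd
  have hρ : 0 < ρ := by positivity
  have hρr : ρ ≤ r := min_le_left _ _
  have hI1 := (abs_le.1 (h1 ρ hρ ((min_le_right _ _).trans (min_le_left _ _)))).2
  have hI2 := (abs_le.1 (h2 ρ hρ ((min_le_right _ _).trans (min_le_right _ _)))).1
  have hDv : HasDerivAt (fun t => φ t y)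
      (K * Real.exp (K * τ) * (Θ + P τ y) + Real.exp (K * τ) * P' + 2 * n * (τ - τ')) τ := by
    have e1 : HasDerivAt (fun t => Real.exp (K * t)) (Real.exp (K * τ) * (K * 1)) τ :=
      ((hasDerivAt_id' τ).const_mul K).exp
    have e2 := ((e1.mul (hP'.const_add Θ)).add (hasDerivAt_sq_sub n τ' τ)).add_const (n * ‖y - y'‖ ^ 2)
    exact e2.congr_deriv (by ring)
  have hDw : HasDerivAt (fun t => ψ t y') (2 * n * (τ - τ')) τ' := by
    have e2 := (hasDerivAt_sq_sub n τ τ').neg.sub_const (n * ‖y' - y‖ ^ 2)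
    exact e2.congr_deriv (by ring)
  have kv := hv.test hτ0 hτT hφc hρ (fun t ht x hx => by
    have := hmax t ht x (hball' y hy x (ball_subset_ball hρr hx)) τ' hτ'I y' hy'I
    simp only [hφ]
    linarith) hDv
  have kw := hw.test hτ'0 hτ'T hψc hρ (fun t ht x hx => by
    have := hmax τ hτI y hyI t ht x (hball' y' hy' x (ball_subset_ball hρr hx))
    simp only [hψ]
    rw [norm_sub_rev y x, norm_sub_rev y y'] at this
    nlinarith) hDw
  obtain ⟨Mv, hMv⟩ := hvr.bdd T
  obtain ⟨Mw, hMw⟩ := hwr.bdd T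
  have hcmp := levyI2_compare (s := s) hN hs hg (hvr.slice hτ0.le) (hMv τ hτI) (hwr.slice hτ'0.le)
    (hMw τ' hτ'I) hρ hρr (C := Real.exp (K * τ) * B) (by positivity) y y' (fun z _ hz => by
      have a1 := hmax τ hτI (y + z) (hball y hy z hz) τ' hτ'I (y' + z) (hball y' hy' z hz)
      rw [add_sub_add_right_eq_sub] at a1
      have a2 := mul_le_mul_of_nonneg_left (hPB z) (Real.exp_pos (K * τ)).le
      linarith)
  have hfv := (abs_le.1 (hf (v τ y) (w τ' y'))).1
  have hexp : 0 ≤ Real.exp (K * τ) * (Θ + P τ y) := mul_nonneg (Real.exp_pos _).le hΘ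
  rw [abs_of_nonneg (by linarith : 0 ≤ v τ y - w τ' y')] at hfv
  have hσ := le_abs_self (σ τ y - σ τ' y')
  have hP2 : 0 ≤ Real.exp (K * τ) * P' := mul_nonneg (Real.exp_pos _).le hP'0
  linarith

set_option maxHeartbeats 1600000 in
/-- Comparison on a large ball for the cell problem: a subsolution whose far-field contribution is
at most `L - δ` on the set where it exceeds `-Dw` stays below the supersolution `w` with constant
forcing `L`, up to the additive constant `1`, at the centre of the ball. -/
theorem cell_comparison (hN : 1 ≤ N) (hs : s ∈ Ioo (0 : ℝ) (1 / 2)) (hg : H1 N g)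
    {f : ℝ → ℝ} {K : ℝ} (hK : 0 ≤ K) (hf : ∀ a b, |f a - f b| ≤ K * |a - b|)
    {σ : ℝ → EN N → ℝ} (hσ : Continuous fun q : ℝ × EN N => σ q.1 q.2)
    {w : ℝ → EN N → ℝ} {L : ℝ} (hw : ViscSup N s g (fun τ y v I => I + L - f v + σ τ y) w)
    (hwr : Reg N w) (hw0 : ∀ y, 0 ≤ w 0 y) {T₁ Dw D δ : ℝ} (hT₁ : 0 ≤ T₁)
    (hDw : ∀ t ∈ Icc 0 (T₁ + 1), ∀ y, |w t y| ≤ Dw) (hδ : 0 < δ) :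
    ∃ r₀ > 0, ∀ r, r₀ ≤ r → ∀ (y₀ : EN N) (v : ℝ → EN N → ℝ), Reg N v →
      ViscSub N s g (fun τ y v I => I - f v + σ τ y) v →
      (∀ y, ‖y - y₀‖ ≤ 2 * r → v 0 y ≤ 0) →
      (∀ τ ∈ Icc 0 (T₁ + 1), ∀ y, ‖y - y₀‖ ≤ 2 * r → v τ y ≤ D) →
      (∀ τ ∈ Ioc 0 (T₁ + 1), ∀ y, ‖y - y₀‖ ≤ r → -Dw ≤ v τ y →
        levyI2 N s g (v τ) r y ≤ L - δ) →
      ∀ τ ∈ Icc 0 T₁, v τ y₀ ≤ w τ y₀ + 1 := by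
  obtain ⟨χ, Kχ, hχ⟩ := exists_bump N
  obtain ⟨S, KS, hS⟩ := exists_step
  have hKχ := hχ.knonneg
  have hDw0 : 0 ≤ Dw := (abs_nonneg _).trans (hDw 0 ⟨le_rfl, by linarith⟩ 0)
  set A := |D| + Dw + 1 with hA
  have hA0 : 0 < A := by positivity
  set E := Real.exp (K * (T₁ + 1)) with hE
  have hr₀ : ∀ᶠ r in atTop, 2 * Dw * c2 N s g r + E * A * Kχ * (r⁻¹ * c1 N s g r) < δ / 2 := by
    have h := ((c2_tendsto (N := N) (g := g) hs).const_mul (2 * Dw)).add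
      ((c1_div_tendsto (N := N) (g := g) hs).const_mul (E * A * Kχ))
    rw [mul_zero, mul_zero, add_zero] at h
    exact h.eventually (Iio_mem_nhds (by linarith))
  obtain ⟨r₁, hr₁⟩ := eventually_atTop.1 hr₀
  refine ⟨max r₁ 1, by positivity, fun r hr y₀ v hvr hv hv0 hvD hfar τ₁ hτ₁ => ?_⟩
  have hrpos : 0 < r := lt_of_lt_of_le (by positivity) hr
  have hsmall := hr₁ r ((le_max_left _ _).trans hr)
  by_contra hcon
  push Not at hcon
  -- the weight `P = B + A S` forces the maximum inside the cylinder
  set P : ℝ × EN N → ℝ := fun q => A * (1 - χ (r⁻¹ • (q.2 - y₀))) + A * S (q.1 - T₁) with hP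
  have hP0 : ∀ q, 0 ≤ P q := fun q =>
    add_nonneg (mul_nonneg hA0.le (by linarith [hχ.le_one (r⁻¹ • (q.2 - y₀))]))
      (mul_nonneg hA0.le (hS.nonneg _))
  have hPc : ContDiff ℝ 2 P := by
    have := hχ.smooth
    have := hS.smooth
    simp only [hP]
    fun_prop
  set Q : Set (ℝ × EN N) := Icc 0 (T₁ + 1) ×ˢ closedBall y₀ (2 * r) with hQ
  have hQc : IsCompact Q := isCompact_Icc.prod (isCompact_closedBall _ _)
  have hvc : ContinuousOn (fun q : ℝ × EN N => v q.1 q.2) Q :=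
    hvr.cont.mono (prod_mono Icc_subset_Ici_self (subset_univ _))
  have hwc : ContinuousOn (fun q : ℝ × EN N => w q.1 q.2) Q :=
    hwr.cont.mono (prod_mono Icc_subset_Ici_self (subset_univ _))
  have hexpc : Continuous fun q : ℝ × EN N => Real.exp (-(K * q.1)) := by fun_prop
  obtain ⟨q₁, hq₁, hΘ⟩ := hQc.exists_isMaxOn (f := fun q : ℝ × EN N =>
      Real.exp (-(K * q.1)) * (v q.1 q.2 - w q.1 q.2) - P q)
    ⟨(τ₁, y₀), ⟨hτ₁.1, by linarith [hτ₁.2]⟩, mem_closedBall_self (by positivity)⟩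
    ((hexpc.continuousOn.mul (hvc.sub (hwc))).sub hPc.continuous.continuousOn)
  set Θ := Real.exp (-(K * q₁.1)) * (v q₁.1 q₁.2 - w q₁.1 q₁.2) - P q₁ with hΘd
  have hΘle : ∀ q ∈ Q, Real.exp (-(K * q.1)) * (v q.1 q.2 - w q.1 q.2) - P q ≤ Θ :=
    fun q hq => hΘ hq
  have hΘ0 : 0 < Θ := by
    refine lt_of_lt_of_le ?_ (hΘle (τ₁, y₀)
      ⟨⟨hτ₁.1, by linarith [hτ₁.2]⟩, mem_closedBall_self (by positivity)⟩)
    have : P (τ₁, y₀) = 0 := by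
      simp only [hP, sub_self, smul_zero, hχ.one, hS.zero (τ₁ - T₁) (by linarith [hτ₁.2])]; ring
    rw [this, sub_zero]
    exact mul_pos (Real.exp_pos _) (by simp only; linarith)
  set G : (ℝ × EN N) × (ℝ × EN N) → ℝ := fun p =>
    v p.1.1 p.1.2 - w p.2.1 p.2.2 - Real.exp (K * p.1.1) * (Θ + P p.1) with hG
  set d : (ℝ × EN N) × (ℝ × EN N) → ℝ := fun p =>
    (p.1.1 - p.2.1) ^ 2 + ‖p.1.2 - p.2.2‖ ^ 2 with hd
  have hGc : ContinuousOn G (Q ×ˢ Q) := by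
    have h1 : ContinuousOn (fun p : (ℝ × EN N) × (ℝ × EN N) => v p.1.1 p.1.2) (Q ×ˢ Q) :=
      hvc.comp continuous_fst.continuousOn (fun p hp => hp.1)
    have h2 : ContinuousOn (fun p : (ℝ × EN N) × (ℝ × EN N) => w p.2.1 p.2.2) (Q ×ˢ Q) :=
      hwc.comp continuous_snd.continuousOn (fun p hp => hp.2)
    have h3 : Continuous fun p : (ℝ × EN N) × (ℝ × EN N) =>
        Real.exp (K * p.1.1) * (Θ + P p.1) := by
      have := hPc.continuous
      fun_prop
    exact (h1.sub h2).sub h3.continuousOn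
  have hexp : ∀ t, Real.exp (K * t) * Real.exp (-(K * t)) = 1 := fun t => by
    rw [← Real.exp_add]; simp
  have hGle : ∀ q ∈ Q, G (q, q) ≤ 0 := fun q hq => by
    have h1 := mul_le_mul_of_nonneg_left (hΘle q hq) (Real.exp_pos (K * q.1)).le
    rw [mul_sub, ← mul_assoc, hexp, one_mul] at h1
    simp only [hG]
    linarith
  have hG₁ : G (q₁, q₁) = 0 := by
    have h1 : Real.exp (K * q₁.1) * Θ
        = v q₁.1 q₁.2 - w q₁.1 q₁.2 - Real.exp (K * q₁.1) * P q₁ := by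
      rw [hΘd, mul_sub, ← mul_assoc, hexp, one_mul]
    simp only [hG]
    linarith
  have hdc : Continuous d := by simp only [hd]; fun_prop
  obtain ⟨q₀, hq₀, hG₀, hpen⟩ := doubling hQc hGc hdc (fun p => by positivity)
    (fun q => by simp [hd]) (fun q q' h => by
      simp only [hd] at h
      have h1 : (q.1 - q'.1) ^ 2 = 0 := by nlinarith [sq_nonneg (q.1 - q'.1), sq_nonneg ‖q.2 - q'.2‖]
      have h2 : ‖q.2 - q'.2‖ ^ 2 = 0 := by
        nlinarith [sq_nonneg (q.1 - q'.1), sq_nonneg ‖q.2 - q'.2‖]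
      have h3 : q.1 - q'.1 = 0 := by simpa using h1
      have h4 : q.2 - q'.2 = 0 := by simpa using h2
      exact Prod.ext (sub_eq_zero.1 h3) (sub_eq_zero.1 h4)) hGle hq₁ hG₁
  have hE1 : ∀ t, 0 ≤ t → 1 ≤ Real.exp (K * t) := fun t ht => Real.one_le_exp (by positivity)
  have hvw : v q₀.1 q₀.2 - w q₀.1 q₀.2 = Real.exp (K * q₀.1) * (Θ + P q₀) := by
    simp only [hG] at hG₀; linarith
  have hvw2 : Θ + P q₀ ≤ v q₀.1 q₀.2 - w q₀.1 q₀.2 := by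
    rw [hvw]
    nlinarith [hE1 q₀.1 hq₀.1.1, hP0 q₀]
  have hy₀ : ‖q₀.2 - y₀‖ ≤ 2 * r := by rw [← dist_eq_norm]; exact hq₀.2
  have hvle : v q₀.1 q₀.2 - w q₀.1 q₀.2 < A := by
    have h1 := hvD q₀.1 hq₀.1 q₀.2 hy₀
    have h2 := (abs_le.1 (hDw q₀.1 hq₀.1 q₀.2)).1
    have := le_abs_self D
    linarith
  have hPlt : P q₀ < A := by linarith
  have ht0 : 0 < q₀.1 := by
    rcases hq₀.1.1.lt_or_eq with h | h
    · exact h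
    · exfalso
      have h1 := hv0 q₀.2 hy₀
      have h2 := hw0 q₀.2
      rw [← h] at hvw2
      linarith [hP0 q₀]
  have ht1 : q₀.1 < T₁ + 1 := by
    by_contra h
    have h1 := hS.one (q₀.1 - T₁) (by linarith)
    have h2 : 0 ≤ A * (1 - χ (r⁻¹ • (q₀.2 - y₀))) :=
      mul_nonneg hA0.le (by linarith [hχ.le_one (r⁻¹ • (q₀.2 - y₀))])
    simp only [hP, h1] at hPlt
    linarith
  have hy1 : ‖q₀.2 - y₀‖ < r := by
    by_contra h
    push Not at h
    have h1 := hχ.zero (r⁻¹ • (q₀.2 - y₀)) (by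
      rw [norm_smul, norm_inv, Real.norm_of_nonneg hrpos.le, inv_mul_eq_div, le_div_iff₀ hrpos]
      linarith)
    have h2 := mul_nonneg hA0.le (hS.nonneg (q₀.1 - T₁))
    simp only [hP, h1] at hPlt
    linarith
  have hvpos : -Dw < v q₀.1 q₀.2 := by
    have h2 := (abs_le.1 (hDw q₀.1 hq₀.1 q₀.2)).1
    linarith [hP0 q₀]
  obtain ⟨e, he0, heK⟩ : ∃ e > 0, (K + 3) * e ≤ δ / 4 := by
    refine ⟨δ / 4 / (K + 3), by positivity, ?_⟩
    rw [mul_div_cancel₀ _ (by positivity : K + 3 ≠ 0)]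
  have hmem : (q₀, q₀) ∈ Q ×ˢ Q := ⟨hq₀, hq₀⟩
  have k1 : Continuous fun p : (ℝ × EN N) × (ℝ × EN N) => p.1.1 := by fun_prop
  have k2 : Continuous fun p : (ℝ × EN N) × (ℝ × EN N) => p.2.1 := by fun_prop
  have k3 : Continuous fun p : (ℝ × EN N) × (ℝ × EN N) => ‖p.1.2 - y₀‖ := by fun_prop
  have k3' : Continuous fun p : (ℝ × EN N) × (ℝ × EN N) => ‖p.2.2 - y₀‖ := by fun_prop
  have k4 : Continuous fun p : (ℝ × EN N) × (ℝ × EN N) =>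
      |σ p.1.1 p.1.2 - σ p.2.1 p.2.2| :=
    ((hσ.comp continuous_fst).sub (hσ.comp continuous_snd)).abs
  have k5 : ContinuousOn (fun p : (ℝ × EN N) × (ℝ × EN N) => v p.1.1 p.1.2) (Q ×ˢ Q) :=
    hvc.comp continuous_fst.continuousOn (fun p hp => hp.1)
  have l1 := (k1.continuousWithinAt (s := Q ×ˢ Q) (x := (q₀, q₀))).eventually
    (p := fun t => t ∈ Ioo 0 (T₁ + 1)) (Ioo_mem_nhds ht0 ht1)
  have l2 := (k2.continuousWithinAt (s := Q ×ˢ Q) (x := (q₀, q₀))).eventually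
    (p := fun t => t ∈ Ioo 0 (T₁ + 1)) (Ioo_mem_nhds ht0 ht1)
  have l3 := (k3.continuousWithinAt (s := Q ×ˢ Q) (x := (q₀, q₀))).eventually
    (p := fun t => t < r) (Iio_mem_nhds hy1)
  have l3' := (k3'.continuousWithinAt (s := Q ×ˢ Q) (x := (q₀, q₀))).eventually
    (p := fun t => t < r) (Iio_mem_nhds hy1)
  have l4 := (k4.continuousWithinAt (s := Q ×ˢ Q) (x := (q₀, q₀))).eventually
    (p := fun t => t < e) (Iio_mem_nhds (by simpa using he0))
  have l5 := (k5 _ hmem).eventually (p := fun t => -Dw < t) (Ioi_mem_nhds hvpos)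
  have l6 := (hGc _ hmem).eventually (p := fun t => t < e) (Iio_mem_nhds (by rw [hG₀]; exact he0))
  obtain ⟨n, hn, ⟨⟨τ, y⟩, ⟨τ', y'⟩⟩, hpQ, ⟨hp1, hp2, hp3, hp3', hp4, hp5, hp6⟩, hmax, hge⟩ :=
    hpen _ (l1.and (l2.and (l3.and (l3'.and (l4.and (l5.and l6))))))
  have hτ : τ ∈ Icc 0 (T₁ + 1) := ⟨hp1.1.le, hp1.2.le⟩
  have hτ' : τ' ∈ Icc 0 (T₁ + 1) := ⟨hp2.1.le, hp2.2.le⟩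
  have hGpos : 0 ≤ G ((τ, y), (τ', y')) := by
    have : 0 ≤ n * d ((τ, y), (τ', y')) := mul_nonneg hn (by simp only [hd]; positivity)
    linarith
  have hP' : HasDerivAt (fun t => P (t, y)) (A * deriv S (τ - T₁)) τ :=
    ((hS.hasDerivAt T₁ τ).const_mul A).const_add (A * (1 - χ (r⁻¹ • (y - y₀))))
  have hPB : ∀ z, P (τ, y + z) ≤ P (τ, y) + A * Kχ * r⁻¹ * ‖z‖ := fun z => by
    have h1 := hχ.lip (r⁻¹ • (y - y₀)) (r⁻¹ • (y + z - y₀))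
    rw [← smul_sub, show y - y₀ - (y + z - y₀) = -z by abel, norm_smul, norm_neg, norm_inv,
      Real.norm_of_nonneg hrpos.le] at h1
    have h2 := mul_le_mul_of_nonneg_left ((le_abs_self _).trans h1) hA0.le
    simp only [hP]
    linarith
  have key := cell_step (P := fun t x => P (t, x)) (e := e) hN hs hg hf hw hwr hv hvr
    (B := A * Kχ * r⁻¹) (by positivity)
    hrpos hPc (by linarith [hP0 (τ, y)]) hPB (mul_nonneg hA0.le (hS.deriv_nonneg _)) hP'
    hp1.1 hp1.2 hp2.1 hp2.2 hp3 hp3' hGpos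
    (fun t ht x hx t' ht' x' hx' => hmax ((t, x), (t', x')) ⟨⟨ht, hx⟩, ⟨ht', hx'⟩⟩) he0
  have hKG : K * (v τ y - w τ' y' - Real.exp (K * τ) * (Θ + P (τ, y))) ≤ K * e :=
    mul_le_mul_of_nonneg_left hp6.le hK
  have hvfar := hfar τ ⟨hp1.1, hp1.2.le⟩ y hp3.le (le_of_lt hp5)
  have hwfar := (abs_le.1 (levyI2_abs (s := s) hN hs hg (u := w τ') (x := y') (C := 2 * Dw) hrpos
    (fun z _ => by
      have h1 := abs_sub (w τ' (y' + z)) (w τ' y')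
      linarith [hDw τ' hτ' (y' + z), hDw τ' hτ' y']))).1
  have hEle : Real.exp (K * τ) * (A * Kχ * r⁻¹) * c1 N s g r
      ≤ E * A * Kχ * (r⁻¹ * c1 N s g r) := by
    have h1 : Real.exp (K * τ) ≤ E := Real.exp_le_exp.2 (mul_le_mul_of_nonneg_left hτ.2 hK)
    have h2 : 0 ≤ A * Kχ * r⁻¹ * c1 N s g r := by
      have := c1_nonneg hs.1 hg r
      positivity
    nlinarith
  have hp4' : |σ τ y - σ τ' y'| < e := hp4
  linarith

end Cell

/-! ### Passage from the macroscopic to the microscopic scale -/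

section Micro

variable {N : ℕ} {s : ℝ} {g : EN N → ℝ}

/-- The vector of `ℝ^N` with prescribed integer coordinates. -/
noncomputable def intVec (N : ℕ) (k : Fin N → ℤ) : EN N :=
  (WithLp.equiv 2 (Fin N → ℝ)).symm (fun j => (k j : ℝ))

theorem exists_int_near (x : EN N) : ∃ k : Fin N → ℤ, ‖x - intVec N k‖ ≤ Real.sqrt N := by
  refine ⟨fun j => ⌊x j⌋, ?_⟩
  rw [EuclideanSpace.norm_eq]
  apply Real.sqrt_le_sqrt
  calc ∑ i, ‖(x - intVec N fun j => ⌊x j⌋) i‖ ^ 2 ≤ ∑ _i : Fin N, (1 : ℝ) := by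
        refine Finset.sum_le_sum fun i _ => ?_
        have e : (x - intVec N fun j => ⌊x j⌋) i = Int.fract (x i) := by
          simp [intVec]
        rw [e, Real.norm_of_nonneg (Int.fract_nonneg _)]
        nlinarith [Int.fract_nonneg (x i), (Int.fract_lt_one (x i)).le]
    _ = N := by simp

theorem rpow_tendsto_zero {a : ℝ} (ha : 0 < a) :
    Tendsto (fun ε : ℝ => ε ^ a) (nhdsWithin 0 (Ioi 0)) (nhds 0) := by
  have := (Real.continuousAt_rpow_const 0 a (Or.inr ha.le)).tendsto
  rw [Real.zero_rpow ha.ne'] at this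
  exact this.mono_left nhdsWithin_le_nhds

theorem eventually_scales (hs : s ∈ Ioo (0 : ℝ) (1 / 2)) {C₀ Tm R r τ₀ : ℝ} (hr : 0 < r)
    (hτ₀ : 0 < τ₀) :
    ∀ᶠ ε : ℝ in nhdsWithin 0 (Ioi 0), 0 < ε ∧ ε ^ (2 * s) * (Tm + 2) ≤ 1 ∧
      ε ^ (2 * s) * Tm ≤ τ₀ ∧ 2 * R * ε ≤ 1 ∧ ε * R ≤ r ∧
      C₀ * (ε ^ (2 * s) * (Tm + 1) ^ 2 + 2 * R * ε ^ (1 - 2 * s)) ≤ 1 ∧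
      2 * R * ε ^ (1 - 2 * s) ≤ 1 := by
  have h1 := rpow_tendsto_zero (a := 2 * s) (by linarith [hs.1])
  have h2 := rpow_tendsto_zero (a := 1 - 2 * s) (by linarith [hs.2])
  have h3 : Tendsto (fun ε : ℝ => ε) (nhdsWithin 0 (Ioi 0)) (nhds 0) := nhdsWithin_le_nhds
  have e1 := h1.mul_const (Tm + 2)
  have e2 := h1.mul_const Tm
  have e3 := h3.const_mul (2 * R)
  have e4 := h3.mul_const R
  have e5 := ((h1.mul_const ((Tm + 1) ^ 2)).add (h2.const_mul (2 * R))).const_mul C₀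
  have e6 := h2.const_mul (2 * R)
  simp only [zero_mul, mul_zero, add_zero] at e1 e2 e3 e4 e5 e6
  filter_upwards [self_mem_nhdsWithin, e1.eventually (Iic_mem_nhds one_pos),
    e2.eventually (Iic_mem_nhds hτ₀), e3.eventually (Iic_mem_nhds one_pos),
    e4.eventually (Iic_mem_nhds hr), e5.eventually (Iic_mem_nhds one_pos),
    e6.eventually (Iic_mem_nhds one_pos)] with ε a0 a1 a2 a3 a4 a5 a6
  exact ⟨a0, a1, a2, a3, a4, a5, a6⟩

theorem Reg.scale {U : ℝ → EN N → ℝ} (hU : Reg N U) {h n m ε : ℝ} (hh : 0 < h) (hn : 0 ≤ n)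
    (k : EN N) : Reg N (fun τ y => h⁻¹ * U (h * (τ + n)) (ε • (y + k)) - m) := by
  refine ⟨?_, fun T => ?_⟩
  · have h1 : ContinuousOn (fun q : ℝ × EN N => U (h * (q.1 + n)) (ε • (q.2 + k)))
        (Ici 0 ×ˢ univ) :=
      hU.cont.comp (f := fun q : ℝ × EN N => (h * (q.1 + n), ε • (q.2 + k))) (by fun_prop)
        (fun q hq => ⟨mul_nonneg hh.le (add_nonneg hq.1 hn), trivial⟩)
    exact (continuousOn_const.mul h1).sub continuousOn_const
  · obtain ⟨M, hM⟩ := hU.bdd (h * (T + n))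
    refine ⟨h⁻¹ * M + |m|, fun t ht x => ?_⟩
    refine (abs_sub _ _).trans (add_le_add_left ?_ _)
    rw [abs_mul, abs_of_pos (inv_pos.2 hh)]
    exact mul_le_mul_of_nonneg_left (hM _ ⟨mul_nonneg hh.le (add_nonneg ht.1 hn),
      mul_le_mul_of_nonneg_left (by linarith [ht.2]) hh.le⟩ _) (inv_pos.2 hh).le

set_option maxHeartbeats 1600000 in
/-- If a subsolution `U` of the oscillating problem is touched from above at `(t₁, x₁)`, with
time slope `b` and with far field controlled by a function `u`, and if the resulting bound for
the nonlocal term is at most `L - 2δ`, then `b` is at most the effective Hamiltonian at `L`, up to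
an error. All constants are uniform in `U` and in the contact point. -/
theorem micro (hN : 1 ≤ N) (hs : s ∈ Ioo (0 : ℝ) (1 / 2)) (hg : H1 N g)
    {f : ℝ → ℝ} {K : ℝ} (hK : 0 ≤ K) (hf : ∀ a b, |f a - f b| ≤ K * |a - b|)
    (hf1 : ∀ v, f (v + 1) = f v)
    {σ : ℝ → EN N → ℝ} (hσ : Continuous fun q : ℝ × EN N => σ q.1 q.2)
    (hσ1 : ∀ t x, σ (t + 1) x = σ t x) (hσk : ∀ k t x, σ t (x + intVec N k) = σ t x)
    {w : ℝ → EN N → ℝ} {L : ℝ} (hw : ViscSup N s g (fun τ y v I => I + L - f v + σ τ y) w)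
    (hwr : Reg N w) (hw0 : ∀ y, 0 ≤ w 0 y) {HL : ℝ} (hslope : SlopeLim N w HL)
    {κ δ r C₀ Cb γ τ₀ : ℝ} (hκ : 0 < κ) (hδ : 0 < δ) (hr : 0 < r) (hr2 : r ≤ 1 / 2)
    (hC₀ : 0 ≤ C₀) (hCb : 0 ≤ Cb) (hτ₀ : 0 < τ₀) :
    ∀ᶠ ε : ℝ in nhdsWithin 0 (Ioi 0), ∀ (U : ℝ → EN N → ℝ) (T t₁ b : ℝ) (x₁ x₂ : EN N)
      (u : EN N → ℝ), Reg N U →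
      ViscSub N s g (fun t x v I => I - f (v / ε ^ (2*s)) + σ (t / ε ^ (2*s)) (ε⁻¹ • x)) U →
      Continuous u → (∃ M, ∀ x, |u x| ≤ M) → τ₀ ≤ t₁ → t₁ + 1 ≤ T → |b| ≤ Cb →
      (∀ t, 0 ≤ t → t ≤ t₁ → ∀ q : EN N, ‖q‖ ≤ 1 →
        U t (x₁ + q) - U t₁ x₁ ≤ (t - t₁) * b + C₀ * ((t - t₁) ^ 2 + ‖q‖)) →
      (∀ t ∈ Icc 0 T, ∀ q : EN N, ‖q‖ ≤ 1 →
        U t (x₁ + q) - U t₁ x₁ ≤ C₀ * (|t - t₁| + ‖q‖)) →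
      (∀ t ∈ Icc 0 T, ∀ q : EN N, ‖q‖ ≤ 1 → ∀ Z : EN N, r < ‖Z‖ →
        U t (x₁ + q + Z) - U t₁ x₁ ≤ u (x₂ + Z) - u x₂ + C₀ * (|t - t₁| + ‖q‖) + γ) →
      C₀ * c1 N s g r + γ * c2 N s g r + levyI2 N s g u r x₂ ≤ L - 2 * δ →
      b ≤ HL + κ / 4 := by
  obtain ⟨Tm₀, hTm₀⟩ := hslope (κ / 8) (by positivity) (Real.sqrt N + 1) (by positivity)
  set Tm := max Tm₀ (24 / κ) with hTm
  have hTmpos : 0 < Tm := lt_of_lt_of_le (by positivity) (le_max_right _ _)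
  obtain ⟨Dw, hDw⟩ := hwr.bdd (Tm + 1 + 1)
  have hDw0 : 0 ≤ Dw := (abs_nonneg _).trans (hDw 0 ⟨le_rfl, by linarith⟩ 0)
  set D := Cb * (Tm + 1) + C₀ * (Tm + 3) with hD
  set D3 := Cb * (Tm + 1) + Dw + C₀ * (Tm + 3) with hD3
  have hD30 : 0 ≤ D3 := by positivity
  obtain ⟨r₀, hr₀, hcell⟩ := cell_comparison (D := D) hN hs hg hK hf hσ hw hwr hw0
    (T₁ := Tm + 1) (by linarith) hDw hδ
  obtain ⟨R, hRr, hRc⟩ : ∃ R ≥ r₀, D3 * c2 N s g R ≤ δ := by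
    have h := (c2_tendsto (N := N) (g := g) hs).const_mul D3
    rw [mul_zero] at h
    obtain ⟨R, h1, h2⟩ := ((eventually_ge_atTop r₀).and (h.eventually (Iic_mem_nhds hδ))).exists
    exact ⟨R, h1, h2⟩
  have hR : 0 < R := lt_of_lt_of_le hr₀ hRr
  filter_upwards [eventually_scales (C₀ := C₀) (Tm := Tm) (R := R) hs hr hτ₀]
    with ε ⟨hε, e1, e2, e3, e4, e5, e6⟩
  intro U T t₁ b x₁ x₂ u hUr hU huc huM ht₁ hT hb ha1 ha2 hb1 hc
  set h := ε ^ (2 * s) with hh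
  have hpos : 0 < h := Real.rpow_pos_of_pos hε _
  have hεh : ε ^ (1 - 2 * s) * h = ε := by
    rw [hh, ← Real.rpow_add hε]; simp
  set ω := ε ^ (1 - 2 * s) with hω
  have hω0 : 0 < ω := Real.rpow_pos_of_pos hε _
  -- integer translations bringing the contact point to a bounded region
  have hdiv : 0 ≤ t₁ / h - Tm := by
    rw [sub_nonneg, le_div_iff₀ hpos]; linarith
  set n := ⌊t₁ / h - Tm⌋₊ with hn
  have hn1 : (n : ℝ) ≤ t₁ / h - Tm := Nat.floor_le hdiv
  have hn2 : t₁ / h - Tm < n + 1 := Nat.lt_floor_add_one _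
  set τ₁ := t₁ / h - n with hτ₁
  have hτ₁a : Tm ≤ τ₁ := by linarith
  have hτ₁b : τ₁ ≤ Tm + 1 := by linarith
  have ht₁h : t₁ = h * (τ₁ + n) := by rw [hτ₁]; field_simp; ring
  obtain ⟨k, hk⟩ := exists_int_near (ε⁻¹ • x₁)
  set y₀ := ε⁻¹ • x₁ - intVec N k with hy₀
  have hx : ∀ y : EN N, ε • (y + intVec N k) = x₁ + ε • (y - y₀) := fun y => by
    rw [hy₀, smul_sub, smul_sub, smul_inv_smul₀ hε.ne', smul_add]; abel
  set V := h⁻¹ * U t₁ x₁ with hV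
  set m := ⌈V - b * τ₁ + 1⌉ with hm
  have hm1 : V - b * τ₁ + 1 ≤ m := Int.le_ceil _
  have hm2 : (m : ℝ) < V - b * τ₁ + 1 + 1 := Int.ceil_lt_add_one _
  set v : ℝ → EN N → ℝ := fun τ y => h⁻¹ * U (h * (τ + n)) (ε • (y + intVec N k)) - m with hv
  have hn0 : (0 : ℝ) ≤ n := Nat.cast_nonneg n
  have hvr : Reg N v := hUr.scale hpos hn0 _
  have hvs : ViscSub N s g (fun τ y v I => I - f v + σ τ y) v := by
    refine hU.scale hε hn0 (fun t x => ?_) (hσk k) (fun a => ?_)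
    · have : Function.Periodic (fun t => σ t x) 1 := fun t => hσ1 t x
      simpa using this.nat_mul n t
    · have : Function.Periodic f 1 := hf1
      simpa using this.int_mul m a
  have htd : ∀ τ, h * (τ + n) - t₁ = h * (τ - τ₁) := fun τ => by rw [ht₁h]; ring
  have hVU : ∀ a, h⁻¹ * (a - U t₁ x₁) = h⁻¹ * a - V := fun a => by rw [hV]; ring
  have hbτ : |b * τ₁| ≤ Cb * (Tm + 1) := by
    rw [abs_mul]
    exact mul_le_mul hb (by rw [abs_of_nonneg (by linarith)]; exact hτ₁b) (abs_nonneg _) hCb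
  have htI : ∀ τ ∈ Icc 0 (Tm + 1 + 1), h * (τ + n) ∈ Icc 0 T := fun τ hτ => by
    refine ⟨mul_nonneg hpos.le (add_nonneg hτ.1 hn0), ?_⟩
    have h1 : h * (τ + n) = t₁ + h * (τ - τ₁) := by linarith [htd τ]
    have h2 : h * (τ - τ₁) ≤ h * (Tm + 2) := mul_le_mul_of_nonneg_left (by linarith [hτ.2]) hpos.le
    linarith
  have hτd : ∀ τ ∈ Icc 0 (Tm + 1 + 1), |h * (τ + n) - t₁| ≤ h * (Tm + 2) := fun τ hτ => by
    rw [htd, abs_mul, abs_of_pos hpos]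
    refine mul_le_mul_of_nonneg_left ?_ hpos.le
    rw [abs_le]
    constructor <;> linarith [hτ.1, hτ.2]
  have hqn : ∀ (y : EN N) (ϱ : ℝ), ‖y - y₀‖ ≤ ϱ → ‖ε • (y - y₀)‖ ≤ ε * ϱ := fun y ϱ hy => by
    rw [norm_smul, Real.norm_of_nonneg hε.le]
    exact mul_le_mul_of_nonneg_left hy hε.le
  have hinv : h⁻¹ * h = 1 := inv_mul_cancel₀ hpos.ne'
  have key := hcell R hRr y₀ v hvr hvs ?_ ?_ ?_ τ₁ ⟨by linarith, hτ₁b⟩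
  · have hslope' := hTm₀ τ₁ ((le_max_left _ _).trans hτ₁a) y₀ (by linarith)
    have hτpos : 0 < τ₁ := by linarith
    have hw1 : w τ₁ y₀ ≤ (HL + κ / 8) * τ₁ := by
      rw [← div_le_iff₀ hτpos]; linarith [(abs_le.1 hslope').2]
    have hv1 : v τ₁ y₀ = V - m := by
      simp only [hv, hx, sub_self, smul_zero, add_zero, ← ht₁h, hV]
    have h24 : 24 ≤ κ * τ₁ := by
      have : 24 / κ ≤ τ₁ := (le_max_right _ _).trans hτ₁a
      rw [div_le_iff₀ hκ] at this
      linarith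
    have hfin : b * τ₁ ≤ (HL + κ / 4) * τ₁ := by linarith
    exact le_of_mul_le_mul_right hfin hτpos
  · intro y hy
    have hq := hqn y _ hy
    have h1 := ha1 (h * (0 + n)) (by positivity) (by
      have := htd 0
      nlinarith) (ε • (y - y₀)) (by linarith)
    have h2 := mul_le_mul_of_nonneg_left h1 (inv_pos.2 hpos).le
    rw [hVU, htd] at h2
    simp only [hv, hx]
    have h3 : h⁻¹ * (h * (0 - τ₁) * b + C₀ * ((h * (0 - τ₁)) ^ 2 + ‖ε • (y - y₀)‖))
        ≤ -(b * τ₁) + C₀ * (h * (Tm + 1) ^ 2 + 2 * R * ω) := by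
      have h4 : (h * (0 - τ₁)) ^ 2 + ‖ε • (y - y₀)‖ ≤ h * (h * (Tm + 1) ^ 2 + 2 * R * ω) := by
        have h5 : τ₁ ^ 2 ≤ (Tm + 1) ^ 2 := pow_le_pow_left₀ (by linarith) hτ₁b 2
        have h6 : h ^ 2 * τ₁ ^ 2 ≤ h ^ 2 * (Tm + 1) ^ 2 := mul_le_mul_of_nonneg_left h5 (by positivity)
        have h7 : ε * (2 * R) = ω * h * (2 * R) := by rw [hεh]
        linarith
      have h8 := mul_le_mul_of_nonneg_left (mul_le_mul_of_nonneg_left h4 hC₀) (inv_pos.2 hpos).le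
      have h9 : h⁻¹ * (C₀ * (h * (h * (Tm + 1) ^ 2 + 2 * R * ω)))
          = (h⁻¹ * h) * (C₀ * (h * (Tm + 1) ^ 2 + 2 * R * ω)) := by ring
      have h10 : h⁻¹ * (h * (0 - τ₁) * b) = (h⁻¹ * h) * (-(b * τ₁)) := by ring
      rw [h9, hinv, one_mul] at h8
      rw [mul_add, h10, hinv, one_mul]
      linarith
    linarith
  · intro τ hτ y hy
    have hq := hqn y _ hy
    have h1 := ha2 (h * (τ + n)) (htI τ hτ) (ε • (y - y₀)) (by linarith)
    have h2 := mul_le_mul_of_nonneg_left h1 (inv_pos.2 hpos).le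
    rw [hVU] at h2
    simp only [hv, hx]
    have h3 : h⁻¹ * (C₀ * (|h * (τ + n) - t₁| + ‖ε • (y - y₀)‖)) ≤ C₀ * (Tm + 3) := by
      have h4 : |h * (τ + n) - t₁| + ‖ε • (y - y₀)‖ ≤ h * (Tm + 3) := by
        have h7 : ε * (2 * R) = ω * h * (2 * R) := by rw [hεh]
        have h8 : h * (2 * R * ω) ≤ h * 1 := mul_le_mul_of_nonneg_left e6 hpos.le
        linarith [hτd τ hτ]
      have h8 := mul_le_mul_of_nonneg_left (mul_le_mul_of_nonneg_left h4 hC₀) (inv_pos.2 hpos).le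
      have h9 : h⁻¹ * (C₀ * (h * (Tm + 3))) = (h⁻¹ * h) * (C₀ * (Tm + 3)) := by ring
      rwa [h9, hinv, one_mul] at h8
    have h4 := (abs_le.1 hbτ).2
    linarith
  · intro τ hτ y hy hlow
    have hτ' : τ ∈ Icc 0 (Tm + 1 + 1) := ⟨hτ.1.le, hτ.2⟩
    have hq := hqn y _ hy
    have hεR : ε * R ≤ h := by
      have h7 : ε * (2 * R) = ω * h * (2 * R) := by rw [hεh]
      have h8 : h * (2 * R * ω) ≤ h * 1 := mul_le_mul_of_nonneg_left e6 hpos.le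
      nlinarith
    have hlow2 : U t₁ x₁ - U (h * (τ + n)) (x₁ + ε • (y - y₀)) ≤ h * (Cb * (Tm + 1) + Dw) := by
      simp only [hv, hx] at hlow
      have h1 : V - h⁻¹ * U (h * (τ + n)) (x₁ + ε • (y - y₀)) ≤ Cb * (Tm + 1) + Dw := by
        have := (abs_le.1 hbτ).2
        linarith
      have h2 := mul_le_mul_of_nonneg_left h1 hpos.le
      have h3 : h * (V - h⁻¹ * U (h * (τ + n)) (x₁ + ε • (y - y₀)))
          = (h⁻¹ * h) * (U t₁ x₁ - U (h * (τ + n)) (x₁ + ε • (y - y₀))) := by rw [hV]; ring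
      rwa [h3, hinv, one_mul] at h2
    obtain ⟨Mu, hMu⟩ := huM
    obtain ⟨MU, hMU⟩ := hUr.bdd T
    have hsc := levyI2_scale (s := s) (g := g) hε (U (h * (τ + n))) R (ε • y) y rfl h⁻¹
      (intVec N k) m
    rw [← hh, hinv, one_mul, ← smul_add, hx] at hsc
    simp only [hv]
    rw [hsc]
    have htm := htI τ hτ'
    have htb : C₀ * |h * (τ + n) - t₁| ≤ C₀ * (h * (Tm + 2)) :=
      mul_le_mul_of_nonneg_left (hτd τ hτ') hC₀
    have hqb : C₀ * ‖ε • (y - y₀)‖ ≤ C₀ * h := mul_le_mul_of_nonneg_left (hq.trans hεR) hC₀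
    have hfar := levyI2_far (s := s) (g := g) hN hs hg (hUr.slice htm.1) (hMU _ htm) huc hMu
      (ρ := ε * R) (R := r) (a := h * D3) (C := C₀) (γ := γ) (by positivity) e4 hC₀
      (x₁ + ε • (y - y₀)) x₂ (fun z _ hz => by
        have n1 := norm_add_le (ε • (y - y₀)) z
        have h1 := ha2 _ htm (ε • (y - y₀) + z) (by linarith)
        have h2 := mul_le_mul_of_nonneg_left n1 hC₀
        rw [← add_assoc] at h1
        rw [hD3]
        linarith)
      (fun z hz => by
        have h1 := hb1 _ htm (ε • (y - y₀)) (by linarith) z hz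
        rw [hD3]
        linarith)
    have hc2 := c2_scale (N := N) (s := s) (g := g) hε R
    rw [← hh] at hc2
    have h5 : h * D3 * c2 N s g (ε * R) = D3 * c2 N s g R := by rw [hc2]; ring
    linarith

end Micro

/-! ### The macroscopic doubling of variables -/

section Doubled

variable {N : ℕ} {s : ℝ} {g : EN N → ℝ}

/-- The doubled functional `U(t,x) - V(t',x')` minus the quadratic penalisation, minus a slope `κ`
in time and a smooth step which keeps maximum points away from the final time, plus a small bump
centred at `x̂` which makes the supremum attained. -/
noncomputable def doubled (U V : ℝ → EN N → ℝ) (S : ℝ → ℝ) (χ : EN N → ℝ) (c κ A T γ : ℝ)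
    (xh : EN N) (t : ℝ) (x : EN N) (t' : ℝ) (x' : EN N) : ℝ :=
  U t x - V t' x' - c * ‖x - x'‖ ^ 2 - c * (t - t') ^ 2 - κ * t - A * S (t - T) + γ * χ (x - xh)

/-- If `U - V` exceeds `η` somewhere, the doubled functional has a maximum point at which both
times are bounded away from `0` and from the final time, and both pairs of variables are close. -/
theorem exists_doubled_max {χ : EN N → ℝ} {Kχ : ℝ} (hχ : IsBump χ Kχ) {S : ℝ → ℝ} {KS : ℝ}
    (hS : IsStep S KS) {U V : ℝ → EN N → ℝ} (hU : Reg N U) (hV : Reg N V) {u₀ : EN N → ℝ}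
    {M M₀ K1 T η c κ A d τ₀ γ : ℝ}
    (hUM : ∀ t ∈ Icc 0 (T + 2), ∀ x, U t x ≤ M) (hVM : ∀ t ∈ Icc 0 (T + 2), ∀ x, |V t x| ≤ M)
    (hUb : ∀ t, 0 ≤ t → ∀ x, U t x ≤ u₀ x + K1 * t)
    (hVb : ∀ t, 0 ≤ t → ∀ x, u₀ x - K1 * t ≤ V t x)
    (hlip : ∀ x y, u₀ x - u₀ y ≤ M₀ * ‖x - y‖) (hM₀ : 0 ≤ M₀) (hK1 : 0 ≤ K1) (hc : 0 < c)
    (hκ : 0 < κ) (hκT : κ * T ≤ η / 2) (hA : 2 * M + 1 ≤ A) (hd : 0 < d) (hd2 : d ≤ 1 / 2)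
    (hdτ : d ≤ τ₀ / 2) (hcd : 2 * M + 1 ≤ c * d ^ 2)
    (hτη : M₀ * d + K1 * (2 * τ₀ + d) ≤ η / 4) (hγ : 0 < γ) (hγ1 : γ < 1) (hγη : γ < η / 4)
    {t₁ : ℝ} (ht₁ : t₁ ∈ Icc 0 T) {x₁ : EN N} (h₁ : η < U t₁ x₁ - V t₁ x₁) :
    ∃ (xh : EN N) (t : ℝ) (x : EN N) (t' : ℝ) (x' : EN N), τ₀ ≤ t ∧ t ≤ T + 1 ∧ τ₀ / 2 ≤ t' ∧
      t' < T + 2 ∧ |t - t'| ≤ d ∧ ‖x - x'‖ ≤ d ∧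
      ∀ r ∈ Icc 0 (T + 2), ∀ y, ∀ r' ∈ Icc 0 (T + 2), ∀ y',
        doubled U V S χ c κ A T γ xh r y r' y' ≤ doubled U V S χ c κ A T γ xh t x t' x' := by
  have hT0 : 0 ≤ T := ht₁.1.trans ht₁.2
  set I : Set (ℝ × EN N) := Icc 0 (T + 2) ×ˢ univ with hI
  set Ψ : (ℝ × EN N) × (ℝ × EN N) → ℝ := fun q => U q.1.1 q.1.2 - V q.2.1 q.2.2
    - c * ‖q.1.2 - q.2.2‖ ^ 2 - c * (q.1.1 - q.2.1) ^ 2 - κ * q.1.1 - A * S (q.1.1 - T) with hΨ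
  have hM0 : 0 ≤ M := (abs_nonneg _).trans (hVM 0 ⟨le_rfl, by linarith⟩ 0)
  have hA0 : 0 ≤ A := by linarith
  have hΨc : ContinuousOn Ψ (I ×ˢ I) := by
    have h1 : ContinuousOn (fun p : (ℝ × EN N) × (ℝ × EN N) => U p.1.1 p.1.2) (I ×ˢ I) :=
      hU.cont.comp continuous_fst.continuousOn (fun p hp => ⟨hp.1.1.1, trivial⟩)
    have h2 : ContinuousOn (fun p : (ℝ × EN N) × (ℝ × EN N) => V p.2.1 p.2.2) (I ×ˢ I) :=
      hV.cont.comp continuous_snd.continuousOn (fun p hp => ⟨hp.2.1.1, trivial⟩)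
    have h3 : Continuous fun q : (ℝ × EN N) × (ℝ × EN N) => c * ‖q.1.2 - q.2.2‖ ^ 2 := by fun_prop
    have h4 : Continuous fun q : (ℝ × EN N) × (ℝ × EN N) => c * (q.1.1 - q.2.1) ^ 2 := by fun_prop
    have h5 : Continuous fun q : (ℝ × EN N) × (ℝ × EN N) => κ * q.1.1 := by fun_prop
    have h6 : Continuous fun q : (ℝ × EN N) × (ℝ × EN N) => A * S (q.1.1 - T) := by
      have := hS.smooth.continuous
      fun_prop
    exact ((((h1.sub h2).sub h3.continuousOn).sub h4.continuousOn).sub h5.continuousOn).sub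
      h6.continuousOn
  have hUV : ∀ q ∈ I ×ˢ I, U q.1.1 q.1.2 - V q.2.1 q.2.2 ≤ 2 * M := fun q hq => by
    have h1 := hUM q.1.1 hq.1.1 q.1.2
    have h2 := (abs_le.1 (hVM q.2.1 hq.2.1 q.2.2)).1
    linarith
  have hparts : ∀ q ∈ I ×ˢ I, 0 ≤ c * ‖q.1.2 - q.2.2‖ ^ 2 ∧ 0 ≤ c * (q.1.1 - q.2.1) ^ 2 ∧
      0 ≤ κ * q.1.1 ∧ 0 ≤ A * S (q.1.1 - T) := fun q hq =>
    ⟨by positivity, by positivity, mul_nonneg hκ.le hq.1.1.1, mul_nonneg hA0 (hS.nonneg _)⟩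
  have hΨM : ∀ q ∈ I ×ˢ I, Ψ q ≤ 2 * M := fun q hq => by
    obtain ⟨h1, h2, h3, h4⟩ := hparts q hq
    have := hUV q hq
    simp only [hΨ]
    linarith
  have hΨ1 : η / 2 ≤ Ψ ((t₁, x₁), (t₁, x₁)) := by
    have h1 : κ * t₁ ≤ κ * T := mul_le_mul_of_nonneg_left ht₁.2 hκ.le
    simp only [hΨ, sub_self, norm_zero, hS.zero (t₁ - T) (by linarith [ht₁.2])]
    linarith
  have hη0 : 0 < η := by linarith
  have hχc := hχ.smooth.continuous
  have ht₁' : t₁ ∈ Icc 0 (T + 2) := ⟨ht₁.1, by linarith [ht₁.2]⟩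
  obtain ⟨p, hp, ⟨⟨t, x⟩, ⟨t', x'⟩⟩, hq, hmax, hge⟩ := exists_max_perturbed
    (θ := fun p q : (ℝ × EN N) × (ℝ × EN N) => χ (q.1.2 - p.1.2)) hΨc hΨM (fun p => by fun_prop)
    (fun p q => hχ.le_one _)
    (fun p => by simp [hχ.one]) hγ (p₁ := ((t₁, x₁), (t₁, x₁)))
    ⟨⟨ht₁', trivial⟩, ⟨ht₁', trivial⟩⟩ (by
      intro p _
      refine ⟨(Icc 0 (T + 2) ×ˢ closedBall p.1.2 1) ×ˢ (Icc 0 (T + 2) ×ˢ closedBall p.1.2 (1 + d)),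
        (isCompact_Icc.prod (isCompact_closedBall _ _)).prod
          (isCompact_Icc.prod (isCompact_closedBall _ _)),
        prod_mono (prod_mono le_rfl (subset_univ _)) (prod_mono le_rfl (subset_univ _)), ?_⟩
      intro q hq hqC
      by_cases h1 : 1 ≤ ‖q.1.2 - p.1.2‖
      · exact Or.inl (hχ.zero _ h1)
      · right
        push Not at h1
        have h2 : d < ‖q.1.2 - q.2.2‖ := by
          by_contra h3
          refine hqC ⟨⟨hq.1.1, ?_⟩, ⟨hq.2.1, ?_⟩⟩
          · rw [mem_closedBall, dist_eq_norm]; exact h1.le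
          · rw [mem_closedBall, dist_eq_norm]
            have := norm_sub_le (q.1.2 - p.1.2) (q.1.2 - q.2.2)
            rw [sub_sub_sub_cancel_left] at this
            linarith
        have h3 : c * d ^ 2 ≤ c * ‖q.1.2 - q.2.2‖ ^ 2 := by gcongr
        obtain ⟨-, k2, k3, k4⟩ := hparts q hq
        have := hUV q hq
        have : Ψ q ≤ -1 := by simp only [hΨ]; linarith
        linarith)
  have hγχ : γ * χ (x - p.1.2) ≤ γ := by nlinarith [hχ.le_one (x - p.1.2)]
  have hge' : η / 2 - γ ≤ Ψ ((t, x), (t', x')) := by simp only at hge; linarith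
  obtain ⟨k1, k2, k3, k4⟩ := hparts _ hq
  have hUVq := hUV _ hq
  have hsub : η / 4 < U t x - V t' x' := by
    simp only [hΨ] at hge' k1 k2 k3 k4
    linarith
  simp only [hΨ] at hge' k1 k2 k3 k4 hUVq
  have hxd : ‖x - x'‖ ≤ d := by
    have : c * ‖x - x'‖ ^ 2 ≤ c * d ^ 2 := by linarith
    exact le_of_sq_le_sq (le_of_mul_le_mul_left this hc) hd.le
  have htd : |t - t'| ≤ d := by
    have : c * (t - t') ^ 2 ≤ c * d ^ 2 := by linarith
    exact abs_le_of_sq_le_sq (le_of_mul_le_mul_left this hc) hd.le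
  have htI : t ∈ Icc 0 (T + 2) := hq.1.1
  have htI' : t' ∈ Icc 0 (T + 2) := hq.2.1
  have htd' := abs_le.1 htd
  have hτ : τ₀ ≤ t := by
    by_contra h
    push Not at h
    have h1 := hUb t htI.1 x
    have h2 := hVb t' htI'.1 x'
    have h3 := (hlip x x').trans (mul_le_mul_of_nonneg_left hxd hM₀)
    have h4 : K1 * t + K1 * t' ≤ K1 * (2 * τ₀ + d) := by
      rw [← mul_add]
      exact mul_le_mul_of_nonneg_left (by linarith) hK1
    linarith
  have htT : t ≤ T + 1 := by
    by_contra h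
    push Not at h
    rw [hS.one (t - T) (by linarith)] at hge'
    linarith
  refine ⟨p.1.2, t, x, t', x', hτ, htT, by linarith, by linarith, htd, hxd,
    fun r hr y r' hr' y' => ?_⟩
  exact hmax ((r, y), (r', y')) ⟨⟨hr, trivial⟩, ⟨hr', trivial⟩⟩

theorem norm_sq_incr {a q : EN N} (ha : ‖a‖ ≤ 1 / 2) (hq : ‖q‖ ≤ 1) :
    ‖a + q‖ ^ 2 - ‖a‖ ^ 2 ≤ 2 * ‖q‖ := by
  have h1 := norm_add_le a q
  have h2 : ‖a + q‖ ^ 2 ≤ (‖a‖ + ‖q‖) ^ 2 := by gcongr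
  nlinarith [norm_nonneg a, norm_nonneg q]

/-- The supersolution test at a maximum point of the doubled functional. -/
theorem doubled_test (hN : 1 ≤ N) (hs : s ∈ Ioo (0 : ℝ) (1 / 2)) (hg : H1 N g)
    {H : ℝ → ℝ} {V : ℝ → EN N → ℝ} (hV : Reg N V) (hVs : ViscSup N s g (fun _ _ _ I => H I) V)
    {c M T t t' r : ℝ} {x x' : EN N} (hc : 0 < c)
    (hVM : ∀ t ∈ Icc 0 T, ∀ x, |V t x| ≤ M) (ht' : 0 < t') (htT : t' < T) (hr : 0 < r)
    (hr1 : r ≤ 1) (hx : ‖x - x'‖ ≤ 1 / 2)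
    (hmin : ∀ r ∈ Icc 0 T, ∀ y, V t' x' + c * ‖x - x'‖ ^ 2 + c * (t - t') ^ 2
      ≤ V r y + c * ‖x - y‖ ^ 2 + c * (t - r) ^ 2) :
    ∃ l, H l ≤ 2 * c * (t - t') ∧ |l - levyI2 N s g (V t') r x'| ≤ c * c1 N s g r ∧
      -(2 * M * c2 N s g 1 + 2 * c * c1 N s g 1) ≤ levyI2 N s g (V t') r x' := by
  set φ : ℝ → EN N → ℝ := fun r y => -(c * ‖x - y‖ ^ 2) - c * (r - t) ^ 2 with hφ
  have hφc : ContDiff ℝ 2 (fun q : ℝ × EN N => φ q.1 q.2) := by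
    have : ContDiff ℝ 2 (fun q : ℝ × EN N => ‖x - q.2‖ ^ 2) :=
      (contDiff_const.sub contDiff_snd).norm_sq ℝ
    simp only [hφ]
    fun_prop
  have htI : t' ∈ Icc 0 T := ⟨ht'.le, htT.le⟩
  have hD : HasDerivAt (fun r => φ r x') (2 * c * (t - t')) t' := by
    have := (hasDerivAt_sq_sub c t t').const_sub (-(c * ‖x - x'‖ ^ 2))
    exact this.congr_deriv (by ring)
  have key := hVs.test ht' htT hφc hr (fun r hr y _ => by
    have := hmin r hr y
    simp only [hφ]
    nlinarith) hD
  refine ⟨_, key, ?_, ?_⟩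
  · rw [add_sub_cancel_right]
    refine levyI1_bound hN hs hg fun z hz => ?_
    have hd : HasFDerivAt (φ t') (-(c • (2 • (innerSL ℝ (x - x')).comp
        (-ContinuousLinearMap.id ℝ (EN N))))) x' := by
      have h1 : HasFDerivAt (fun y : EN N => x - y) (-ContinuousLinearMap.id ℝ (EN N)) x' :=
        (hasFDerivAt_id x').const_sub x
      have h2 := h1.norm_sq
      exact ((h2.const_mul c).neg).sub_const _
    rw [hd.fderiv]
    have e : φ t' (x' + z) - φ t' x' - (-(c • (2 • (innerSL ℝ (x - x')).comp
        (-ContinuousLinearMap.id ℝ (EN N))))) z = -(c * ‖z‖ ^ 2) := by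
      have h3 : ‖x - (x' + z)‖ ^ 2 = ‖x - x'‖ ^ 2 - 2 * ⟪x - x', z⟫ + ‖z‖ ^ 2 := by
        rw [← sub_sub]; exact norm_sub_sq_real _ _
      simp only [hφ, h3]
      simp [inner_sub_left]
      ring
    rw [e, abs_neg, abs_of_nonneg (by positivity)]
    nlinarith [norm_nonneg z, mul_nonneg (norm_nonneg z) (sub_nonneg.2 (hz.trans hr1))]
  · have h1 := levyI2_compare (s := s) (g := g) (u := fun _ => 0) (w := V t') (M := 0) (M' := M)
      (ρ := r) (R := 1) (C := 2 * c) hN hs hg continuous_const (by simp) (hV.slice ht'.le)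
      (hVM t' htI) hr hr1 (by positivity) x' x' (fun z h1 h2 => by
        have k1 := hmin t' htI (x' + z)
        have k2 := norm_sq_incr (a := x - x') (q := -z) hx (by simpa using h2)
        rw [norm_neg, ← sub_eq_add_neg, sub_sub] at k2
        nlinarith)
    have h2 : ∀ ρ, levyI2 N s g (fun _ => 0) ρ x' = 0 := fun ρ => by simp [levyI2]
    have h3 := (abs_le.1 (levyI2_abs (s := s) hN hs hg (u := V t') (x := x') (C := 2 * M) one_pos
      (fun z _ => by
        have h1 := abs_sub (V t' (x' + z)) (V t' x')
        linarith [hVM t' htI (x' + z), hVM t' htI x']))).1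
    rw [h2, h2] at h1
    linarith

end Doubled

/-! ### One-sided convergence -/

section OneSided

variable {N : ℕ} {s : ℝ} {g : EN N → ℝ}

/-- The effective Hamiltonian grows at least like the identity. -/
theorem slope_lower (hN : 1 ≤ N) (hs : s ∈ Ioo (0 : ℝ) (1 / 2)) (hg : H1 N g)
    {f : ℝ → ℝ} {σ : ℝ → EN N → ℝ} {C : ℝ} (hC : ∀ v t x, |σ t x - f v| ≤ C)
    {w : ℝ → EN N → ℝ} {L : ℝ} (hw : ViscSup N s g (fun τ y v I => I + L - f v + σ τ y) w)
    (hwr : Reg N w) (hw0 : ∀ y, 0 ≤ w 0 y) {HL : ℝ} (hslope : SlopeLim N w HL) :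
    L - C ≤ HL := by
  have hb := ViscSup.barrier hN hs hg (C := C - L) (fun t x v I => by
    have := (abs_le.1 (hC v t x)).1
    linarith) hw hwr (u₀ := fun _ => 0) contDiff_const (M₀ := 0) (by simp) (by simp) hw0
  refine le_of_forall_pos_le_add fun e he => ?_
  obtain ⟨T, hT⟩ := hslope e he 1 one_pos
  have hpos : 0 < max T 1 := lt_of_lt_of_le one_pos (le_max_right _ _)
  have h1 := (abs_le.1 (hT (max T 1) (le_max_left _ _) 0 (by simp))).2
  have h2 := hb (max T 1) hpos.le 0
  have h3 : L - C ≤ w (max T 1) 0 / max T 1 := by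
    rw [le_div_iff₀ hpos]; linarith
  linarith

set_option maxHeartbeats 1600000 in
/-- At a maximum point of the doubled functional the subsolution `U` satisfies the hypotheses of
the microscopic comparison, with a constant `C₀` that does not depend on the point. -/
theorem doubled_touch {χ : EN N → ℝ} {Kχ : ℝ} (hχ : IsBump χ Kχ) {S : ℝ → ℝ} {KS : ℝ}
    (hS : IsStep S KS) {U V : ℝ → EN N → ℝ} {c κ A T γ C₀ : ℝ} (hc : 0 < c) (hκ : 0 < κ)
    (hA : 0 ≤ A) (hγ : 0 < γ) (hγ1 : γ < 1)
    (hC₀ : C₀ = 2 * c + Kχ + c * (T + 3) + κ + A * KS)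
    {xh x x' : EN N} {t t' : ℝ} (ht : t ∈ Icc 0 (T + 2)) (ht' : t' ∈ Icc 0 (T + 2))
    (htd : |t - t'| ≤ 1 / 2) (hxd : ‖x - x'‖ ≤ 1 / 2)
    (hmax : ∀ r ∈ Icc 0 (T + 2), ∀ y, ∀ r' ∈ Icc 0 (T + 2), ∀ y',
      doubled U V S χ c κ A T γ xh r y r' y' ≤ doubled U V S χ c κ A T γ xh t x t' x') :
    (∀ r, 0 ≤ r → r ≤ t → ∀ q : EN N, ‖q‖ ≤ 1 → U r (x + q) - U t x
      ≤ (r - t) * (2 * c * (t - t') + κ) + C₀ * ((r - t) ^ 2 + ‖q‖)) ∧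
    (∀ r ∈ Icc 0 (T + 2), ∀ q : EN N, ‖q‖ ≤ 1 →
      U r (x + q) - U t x ≤ C₀ * (|r - t| + ‖q‖)) ∧
    (∀ r ∈ Icc 0 (T + 2), ∀ q : EN N, ‖q‖ ≤ 1 → ∀ Z : EN N,
      U r (x + q + Z) - U t x ≤ V t' (x' + Z) - V t' x' + C₀ * (|r - t| + ‖q‖) + γ) := by
  have hKχ := hχ.knonneg
  have hKS := hS.knonneg
  have hT : 0 ≤ T + 2 := ht.1.trans ht.2
  have hAKS : 0 ≤ A * KS := by positivity
  have hsp : ∀ q : EN N, ‖q‖ ≤ 1 → c * ‖x - x' + q‖ ^ 2 - c * ‖x - x'‖ ^ 2 ≤ 2 * c * ‖q‖ :=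
    fun q hq => by
      have := mul_le_mul_of_nonneg_left (norm_sq_incr hxd hq) hc.le
      linarith
  have hcT : 0 ≤ c * (T + 2) := by positivity
  have hC1 : 2 * c + Kχ ≤ C₀ := by rw [hC₀]; linarith
  have hC2 : c ≤ C₀ := by linarith
  have hC3 : 2 * c ≤ C₀ := by linarith
  have hC4 : c * (T + 3) + κ + A * KS ≤ C₀ := by linarith
  have htime : ∀ r ∈ Icc 0 (T + 2), c * (r - t') ^ 2 - c * (t - t') ^ 2 + κ * (r - t)
      + A * (S (r - T) - S (t - T)) ≤ C₀ * |r - t| := fun r hr => by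
    have h1 : c * (r - t') ^ 2 - c * (t - t') ^ 2 = c * ((2 * (t - t') + (r - t)) * (r - t)) := by
      ring
    have h2 : (2 * (t - t') + (r - t)) * (r - t) ≤ (T + 3) * |r - t| := by
      refine (le_abs_self _).trans ?_
      rw [abs_mul]
      refine mul_le_mul_of_nonneg_right ?_ (abs_nonneg _)
      rw [abs_le] at htd ⊢
      constructor <;> linarith [hr.1, hr.2, ht.1, ht.2]
    have h3 : S (r - T) - S (t - T) ≤ KS * |r - t| := by
      have := (le_abs_self _).trans (hS.lip (r - T) (t - T))
      rwa [sub_sub_sub_cancel_right] at this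
    have h4 := mul_le_mul_of_nonneg_left h2 hc.le
    have h5 := mul_le_mul_of_nonneg_left h3 hA
    have h6 := mul_le_mul_of_nonneg_left (le_abs_self (r - t)) hκ.le
    have h7 := mul_le_mul_of_nonneg_right hC4 (abs_nonneg (r - t))
    rw [h1]
    linarith
  have hbump : ∀ q : EN N, γ * χ (x - xh) - γ * χ (x + q - xh) ≤ Kχ * ‖q‖ := fun q => by
    have h1 := (le_abs_self _).trans (hχ.lip (x - xh) (x + q - xh))
    rw [show x - xh - (x + q - xh) = -q by abel, norm_neg] at h1
    have h2 : 0 ≤ Kχ * ‖q‖ := by positivity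
    nlinarith
  have hnear : ∀ r ∈ Icc 0 (T + 2), ∀ q : EN N, ‖q‖ ≤ 1 → U r (x + q) - U t x
      ≤ c * (r - t') ^ 2 - c * (t - t') ^ 2 + κ * (r - t)
      + A * (S (r - T) - S (t - T)) + C₀ * ‖q‖ := fun r hr q hq => by
    have h1 := hmax r hr (x + q) t' ht' x'
    simp only [doubled] at h1
    rw [show x + q - x' = x - x' + q by abel] at h1
    have h2 := hsp q hq
    have h3 := hbump q
    have h4 := mul_le_mul_of_nonneg_right hC1 (norm_nonneg q)
    linarith
  refine ⟨fun r hr0 hrt q hq => ?_, fun r hr q hq => ?_, fun r hr q hq Z => ?_⟩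
  · have h1 := hnear r ⟨hr0, hrt.trans ht.2⟩ q hq
    have h2 : A * (S (r - T) - S (t - T)) ≤ 0 :=
      mul_nonpos_of_nonneg_of_nonpos hA (sub_nonpos.2 (hS.mono (by linarith)))
    have h3 := mul_le_mul_of_nonneg_right hC2 (sq_nonneg (r - t))
    nlinarith
  · have h1 := hnear r hr q hq
    have h2 := htime r hr
    linarith
  · have h1 := hmax r hr (x + q + Z) t' ht' (x' + Z)
    simp only [doubled] at h1
    rw [show x + q + Z - (x' + Z) = x - x' + q by abel] at h1
    have h2 := hsp q hq
    have h3 := htime r hr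
    have h4 := mul_le_mul_of_nonneg_right hC3 (norm_nonneg q)
    have h5 : γ * χ (x - xh) ≤ γ := by nlinarith [hχ.le_one (x - xh)]
    have h6 : 0 ≤ γ * χ (x + q + Z - xh) := mul_nonneg hγ.le (hχ.nonneg _)
    linarith

set_option maxHeartbeats 1600000 in
/-- Subsolutions of the oscillating problem are asymptotically below the supersolution of the
effective problem, uniformly in space. -/
theorem one_sided (hN : 1 ≤ N) (hs : s ∈ Ioo (0 : ℝ) (1 / 2)) (hg : H1 N g)
    {f : ℝ → ℝ} {K : ℝ} (hK : 0 ≤ K) (hf : ∀ a b, |f a - f b| ≤ K * |a - b|)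
    (hf1 : ∀ v, f (v + 1) = f v)
    {σ : ℝ → EN N → ℝ} (hσ : Continuous fun q : ℝ × EN N => σ q.1 q.2)
    (hσ1 : ∀ t x, σ (t + 1) x = σ t x) (hσk : ∀ k t x, σ t (x + intVec N k) = σ t x)
    {C : ℝ} (hC : ∀ v t x, |σ t x - f v| ≤ C)
    {u₀ : EN N → ℝ} (hu₀ : ContDiff ℝ 2 u₀) {M₀ : ℝ} (hM₀ : ∀ x, |u₀ x| ≤ M₀)
    (hlip : ∀ x, ‖fderiv ℝ u₀ x‖ ≤ M₀)
    {H : ℝ → ℝ} (hH : Continuous H)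
    (hcell : ∀ L, ∃ w : ℝ → EN N → ℝ, Reg N w ∧ (∀ y, 0 ≤ w 0 y) ∧
      ViscSup N s g (fun τ y v I => I + L - f v + σ τ y) w ∧ SlopeLim N w (H L))
    {Uε : ℝ → ℝ → EN N → ℝ} (hUr : ∀ ε, 0 < ε → Reg N (Uε ε))
    (hU0 : ∀ ε, 0 < ε → ∀ x, Uε ε 0 x ≤ u₀ x)
    (hUs : ∀ ε, 0 < ε → ViscSub N s g
      (fun t x v I => I - f (v / ε ^ (2*s)) + σ (t / ε ^ (2*s)) (ε⁻¹ • x)) (Uε ε))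
    {V : ℝ → EN N → ℝ} (hV : Reg N V) (hV0 : ∀ x, u₀ x ≤ V 0 x)
    (hVs : ViscSup N s g (fun _ _ _ I => H I) V) {η T : ℝ} (hη : 0 < η) (hT : 0 < T) :
    ∀ᶠ ε : ℝ in nhdsWithin 0 (Ioi 0), ∀ t ∈ Icc 0 T, ∀ x, Uε ε t x - V t x ≤ η := by
  obtain ⟨χ, Kχ, hχ⟩ := exists_bump N
  obtain ⟨S, KS, hS⟩ := exists_step
  have hKχ := hχ.knonneg
  have hKS := hS.knonneg
  have hC0 : 0 ≤ C := (abs_nonneg _).trans (hC 0 0 0)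
  have hM₀0 : 0 ≤ M₀ := (abs_nonneg _).trans (hM₀ 0)
  have hc11 := c1_nonneg hs.1 hg 1
  have hc21 := c2_nonneg hs.1 hg 1
  set K1 := C + 2 * M₀ * (c1 N s g 1 + c2 N s g 1) with hK1
  have hK10 : 0 ≤ K1 := by positivity
  have hHl : ∀ L, L - C ≤ H L := fun L => by
    obtain ⟨w, hwr, hw0, hw, hsl⟩ := hcell L
    exact slope_lower hN hs hg hC hw hwr hw0 hsl
  have hVb : ∀ t, 0 ≤ t → ∀ x, u₀ x - K1 * t ≤ V t x :=
    ViscSup.barrier hN hs hg (fun _ _ _ I => hHl I) hVs hV hu₀ hM₀ hlip hV0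
  have hUb : ∀ ε, 0 < ε → ∀ t, 0 ≤ t → ∀ x, Uε ε t x ≤ u₀ x + K1 * t := by
    intro ε hε t ht x
    have := ViscSup.barrier (u₀ := fun x => -u₀ x) (M₀ := M₀) (C := C) hN hs hg
      (fun t x v I => by
        have := (abs_le.1 (hC (-v / ε ^ (2*s)) (t / ε ^ (2*s)) (ε⁻¹ • x))).2
        linarith) (hUs ε hε).neg (hUr ε hε).neg hu₀.neg (by simpa using hM₀)
      (fun x => by rw [fderiv_fun_neg, norm_neg]; exact hlip x)
      (fun x => neg_le_neg (hU0 ε hε x)) t ht x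
    linarith
  have hlip' : ∀ x y, u₀ x - u₀ y ≤ M₀ * ‖x - y‖ := fun x y => by
    have h1 := Convex.norm_image_sub_le_of_norm_fderiv_le (𝕜 := ℝ) (f := u₀) (s := univ)
      (x := y) (y := x) (fun x _ => hu₀.differentiable (by norm_num) x) (fun x _ => hlip x)
      convex_univ trivial trivial
    exact (le_abs_self _).trans h1
  obtain ⟨MV, hMV⟩ := hV.bdd (T + 2)
  have hMV0 : 0 ≤ MV := (abs_nonneg _).trans (hMV 0 ⟨le_rfl, by linarith⟩ 0)
  set M := M₀ + K1 * (T + 2) + MV with hM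
  have hM0 : 0 ≤ M := by positivity
  have hVM : ∀ t ∈ Icc 0 (T + 2), ∀ x, |V t x| ≤ M := fun t ht x => by
    have : 0 ≤ K1 * (T + 2) := by positivity
    linarith [hMV t ht x]
  have hUM : ∀ ε, 0 < ε → ∀ t ∈ Icc 0 (T + 2), ∀ x, Uε ε t x ≤ M := fun ε hε t ht x => by
    have h1 := hUb ε hε t ht.1 x
    have h2 := (abs_le.1 (hM₀ x)).2
    have h3 := mul_le_mul_of_nonneg_left ht.2 hK10
    linarith
  -- parameters of the doubling
  set κ := η / (2 * T) with hκd
  have hκ : 0 < κ := by positivity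
  have hκT : κ * T ≤ η / 2 := by rw [hκd]; apply le_of_eq; field_simp
  set A := 2 * M + 1 with hA
  have hA0 : 0 ≤ A := by positivity
  set τ₀ := min 1 (η / (4 * (M₀ + 3 * K1 + 1))) with hτ₀d
  have hτ₀ : 0 < τ₀ := by positivity
  have hτ₀1 : τ₀ ≤ 1 := min_le_left _ _
  have hτη : (M₀ + 3 * K1 + 1) * τ₀ ≤ η / 4 := by
    refine (mul_le_mul_of_nonneg_left (min_le_right _ _) (by positivity)).trans (le_of_eq ?_)
    field_simp
  set d := τ₀ / 2 with hdd
  have hd : 0 < d := by positivity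
  have hd2 : d ≤ 1 / 2 := by linarith
  have hτη' : M₀ * d + K1 * (2 * τ₀ + d) ≤ η / 4 := by
    have h1 : M₀ * d + K1 * (2 * τ₀ + d) = (M₀ + 5 * K1) / 2 * τ₀ := by rw [hdd]; ring
    have h2 : (M₀ + 5 * K1) / 2 * τ₀ ≤ (M₀ + 3 * K1 + 1) * τ₀ :=
      mul_le_mul_of_nonneg_right (by linarith) hτ₀.le
    linarith
  set c := (2 * M + 1) / d ^ 2 with hcd
  have hc : 0 < c := by positivity
  have hcd2 : 2 * M + 1 ≤ c * d ^ 2 := by rw [hcd]; apply le_of_eq; field_simp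
  set C₀ := 2 * c + Kχ + c * (T + 3) + κ + A * KS with hC₀
  have hC₀0 : 0 ≤ C₀ := by positivity
  -- range of the nonlocal terms, and modulus of continuity of `H` there
  set Λ := 2 * M * c2 N s g 1 + 2 * c * c1 N s g 1 + c + C + 1 with hΛ
  have hΛ0 : 0 ≤ Λ := by positivity
  obtain ⟨δ, hδ, hδ1, hHδ⟩ : ∃ δ > 0, δ ≤ 1 ∧ ∀ a ∈ Icc (-Λ) Λ, ∀ b, a ≤ b → b ≤ a + 4 * δ →
      H b ≤ H a + κ / 4 := by
    have huc := (isCompact_Icc (a := -Λ) (b := Λ + 4)).uniformContinuousOn_of_continuous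
      hH.continuousOn
    rw [Metric.uniformContinuousOn_iff] at huc
    obtain ⟨δ, hδ, h⟩ := huc (κ / 4) (by positivity)
    refine ⟨min 1 (δ / 8), by positivity, min_le_left _ _, fun a ha b hab hb => ?_⟩
    have h1 := min_le_left 1 (δ / 8)
    have h2 := min_le_right 1 (δ / 8)
    have h3 := h b ⟨by linarith [ha.1], by linarith [ha.2]⟩ a ⟨ha.1, by linarith [ha.2]⟩ (by
      rw [Real.dist_eq, abs_of_nonneg (by linarith)]; linarith)
    rw [Real.dist_eq] at h3
    linarith [(abs_lt.1 h3).2]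
  obtain ⟨r, hr, hr2, hrc⟩ : ∃ r > 0, r ≤ 1 / 2 ∧ (C₀ + c) * c1 N s g r ≤ δ / 2 := by
    obtain ⟨ρ₀, hρ₀, h⟩ := c1_small (N := N) (g := g) hs
      (show 0 < δ / 2 / (C₀ + c) by positivity)
    refine ⟨min (1 / 2) ρ₀, by positivity, min_le_left _ _, ?_⟩
    have := h (min (1 / 2) ρ₀) (by positivity) (min_le_right _ _)
    rw [le_div_iff₀ (by positivity)] at this
    linarith
  have hc1r := c1_nonneg hs.1 hg r
  have hc2r := c2_nonneg hs.1 hg r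
  have hC₀r : 0 ≤ C₀ * c1 N s g r := by positivity
  have hcr : 0 ≤ c * c1 N s g r := by positivity
  obtain ⟨γ, hγ, hγ1, hγη, hγc⟩ : ∃ γ > 0, γ < 1 ∧ γ < η / 4 ∧ γ * c2 N s g r ≤ δ / 2 := by
    refine ⟨min (min (1 / 2) (η / 8)) (δ / 2 / (c2 N s g r + 1)), by positivity,
      ((min_le_left _ _).trans (min_le_left _ _)).trans_lt (by norm_num),
      ((min_le_left _ _).trans (min_le_right _ _)).trans_lt (by linarith), ?_⟩
    refine (mul_le_mul_of_nonneg_right (min_le_right _ _) hc2r).trans ?_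
    rw [div_mul_eq_mul_div, div_le_iff₀ (by positivity)]
    nlinarith
  -- the forcings `L` are taken in a finite grid of step `δ`
  have hgrid := (Filter.eventually_all_finset
    (Finset.Icc (⌈-Λ / δ⌉ + 3) (⌈Λ / δ⌉ + 3))).2 (fun k _ => by
      obtain ⟨w, hwr, hw0, hw, hsl⟩ := hcell (k * δ)
      exact micro (κ := κ) (δ := δ) (r := r) (C₀ := C₀) (Cb := c + κ) (γ := γ) (τ₀ := τ₀)
        hN hs hg hK hf hf1 hσ hσ1 hσk hw hwr hw0 hsl hκ hδ hr hr2 hC₀0 (by positivity) hτ₀)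
  filter_upwards [hgrid, self_mem_nhdsWithin] with ε hε hε0 t₁ ht₁ x₁
  have hε0 : 0 < ε := hε0
  by_contra hcon
  push Not at hcon
  obtain ⟨xh, t, x, t', x', htτ, htT, ht'τ, ht'T, htd, hxd, hmax⟩ :=
    exists_doubled_max hχ hS (hUr ε hε0) hV (hUM ε hε0) hVM (hUb ε hε0) hVb hlip' hM₀0 hK10 hc hκ hκT
      (A := A) le_rfl hd hd2 le_rfl hcd2 hτη' hγ hγ1 hγη ht₁ hcon
  have htI : t ∈ Icc 0 (T + 2) := ⟨by linarith, by linarith⟩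
  have htI' : t' ∈ Icc 0 (T + 2) := ⟨by linarith, by linarith⟩
  obtain ⟨ha1, ha2, hb⟩ := doubled_touch hχ hS hc hκ hA0 hγ hγ1 hC₀ htI htI' (htd.trans hd2)
    (hxd.trans hd2) hmax
  obtain ⟨l, hl1, hl2, hl3⟩ := doubled_test (r := r) (t := t) (x := x) (x' := x') hN hs hg hV hVs hc hVM (by linarith : 0 < t')
    ht'T hr (by linarith) (hxd.trans hd2) (fun r hr y => by
      have := hmax t htI x r hr y
      simp only [doubled] at this
      linarith)
  have htd' := abs_le.1 (htd.trans hd2)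
  have hbc : |2 * c * (t - t')| ≤ c := by
    rw [abs_mul, abs_of_pos (by positivity : 0 < 2 * c)]
    nlinarith [htd.trans hd2]
  have hbc' := abs_le.1 hbc
  have hl2' := abs_le.1 hl2
  have hl : l ∈ Icc (-Λ) Λ := by
    have := hHl l
    have h1 : 0 ≤ 2 * M * c2 N s g 1 := by positivity
    have h2 : 0 ≤ 2 * c * c1 N s g 1 := by positivity
    constructor
    · linarith
    · linarith
  set k : ℤ := ⌈l / δ⌉ + 3 with hk
  have hk1 : l + 3 * δ ≤ k * δ := by
    have h1 := Int.le_ceil (l / δ)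
    rw [div_le_iff₀ hδ] at h1
    rw [hk]; push_cast; linarith
  have hk2 : k * δ ≤ l + 4 * δ := by
    have h1 := (Int.ceil_lt_add_one (l / δ)).le
    have h2 := mul_le_mul_of_nonneg_right h1 hδ.le
    rw [add_mul, div_mul_cancel₀ _ hδ.ne'] at h2
    rw [hk]; push_cast; linarith
  have hkm : k ∈ Finset.Icc (⌈-Λ / δ⌉ + 3) (⌈Λ / δ⌉ + 3) := by
    rw [Finset.mem_Icc, hk]
    have h1 : ⌈-Λ / δ⌉ ≤ ⌈l / δ⌉ := Int.ceil_mono (div_le_div_of_nonneg_right hl.1 hδ.le)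
    have h2 : ⌈l / δ⌉ ≤ ⌈Λ / δ⌉ := Int.ceil_mono (div_le_div_of_nonneg_right hl.2 hδ.le)
    omega
  have hfin := hε k hkm (Uε ε) (T + 2) t (2 * c * (t - t') + κ) x x' (V t') (hUr ε hε0)
    (hUs ε hε0) (hV.slice htI'.1) ⟨M, hVM t' htI'⟩ htτ (by linarith)
    (by rw [abs_le]; constructor <;> linarith) ha1 ha2 (fun r hr q hq Z _ => hb r hr q hq Z)
    (by linarith)
  have hHk := hHδ l hl (k * δ) (by linarith) hk2
  linarith

end OneSided

/-! ### Conclusion -/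

section Conclusion

variable {N : ℕ} {s : ℝ} {g : EN N → ℝ}

theorem IsSol.reg {F : ℝ → EN N → ℝ → (EN N →L[ℝ] ℝ) → ℝ → ℝ} {u₀ : EN N → ℝ} {u : ℝ → EN N → ℝ}
    (h : IsSol N s g F u₀ u) {M₀ : ℝ} (hM₀ : ∀ x, |u₀ x| ≤ M₀) : Reg N u := by
  refine ⟨h.1, fun T => ?_⟩
  obtain ⟨M, hM⟩ := h.2.1.2.1 (max T 1) (by positivity)
  refine ⟨max M M₀, fun t ht x => ?_⟩
  rcases ht.1.lt_or_eq with h0 | h0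
  · exact (hM t ⟨h0, ht.2.trans (le_max_left _ _)⟩ x).trans (le_max_left _ _)
  · have e : u 0 x = u₀ x := le_antisymm (h.2.1.2.2.1 x) (h.2.2.2.2.1 x)
    rw [← h0, e]
    exact (hM₀ x).trans (le_max_right _ _)

theorem IsSol.viscSub {F : ℝ → EN N → ℝ → (EN N →L[ℝ] ℝ) → ℝ → ℝ} {u₀ : EN N → ℝ}
    {u : ℝ → EN N → ℝ} (h : IsSol N s g F u₀ u) {G : ℝ → EN N → ℝ → ℝ → ℝ}
    (hFG : ∀ t x v p I, F t x v p I = G t x v I) : ViscSub N s g G u := by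
  intro t₀ x₀ ht φ hφ τ r hτ hτt hr hmax
  have := h.2.1.2.2.2 t₀ x₀ ht φ hφ τ r hτ hτt hr hmax
  rw [hFG] at this
  exact sub_nonpos.1 this

theorem IsSol.viscSup {F : ℝ → EN N → ℝ → (EN N →L[ℝ] ℝ) → ℝ → ℝ} {u₀ : EN N → ℝ}
    {u : ℝ → EN N → ℝ} (h : IsSol N s g F u₀ u) {G : ℝ → EN N → ℝ → ℝ → ℝ}
    (hFG : ∀ t x v p I, F t x v p I = G t x v I) : ViscSup N s g G u := by
  intro t₀ x₀ ht φ hφ τ r hτ hτt hr hmin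
  have := h.2.2.2.2.2 t₀ x₀ ht φ hφ τ r hτ hτt hr hmin
  rw [hFG] at this
  exact sub_nonneg.1 this

theorem periodic_bdd {f : ℝ → ℝ} (hf : Continuous f) (hf1 : ∀ v, f (v + 1) = f v) :
    ∃ C, ∀ v, |f v| ≤ C := by
  obtain ⟨C, hC⟩ := (isCompact_Icc (a := (0 : ℝ)) (b := 1)).exists_bound_of_continuousOn
    hf.continuousOn
  refine ⟨C, fun v => ?_⟩
  have h1 : f v = f (Int.fract v) := by
    have hp : Function.Periodic f 1 := hf1
    have := hp.sub_int_mul_eq ⌊v⌋ (x := v)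
    rw [mul_one] at this
    exact this.symm
  rw [h1]
  exact hC _ ⟨Int.fract_nonneg v, (Int.fract_lt_one v).le⟩

theorem periodic_bdd_space {σ : ℝ → EN N → ℝ} (hσ : Continuous fun q : ℝ × EN N => σ q.1 q.2)
    (hσ1 : ∀ t x, σ (t + 1) x = σ t x) (hσk : ∀ k t x, σ t (x + intVec N k) = σ t x) :
    ∃ C, ∀ t x, |σ t x| ≤ C := by
  obtain ⟨C, hC⟩ := ((isCompact_Icc (a := (0 : ℝ)) (b := 1)).prod
    (isCompact_closedBall (0 : EN N) (Real.sqrt N))).exists_bound_of_continuousOn hσ.continuousOn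
  refine ⟨C, fun t x => ?_⟩
  obtain ⟨k, hk⟩ := exists_int_near x
  have h1 : σ t x = σ t (x - intVec N k) := by
    rw [← hσk k t (x - intVec N k), sub_add_cancel]
  have h2 : σ t (x - intVec N k) = σ (Int.fract t) (x - intVec N k) := by
    have hp : Function.Periodic (fun t => σ t (x - intVec N k)) 1 := fun t => hσ1 t _
    have := hp.sub_int_mul_eq ⌊t⌋ (x := t)
    rw [mul_one] at this
    exact this.symm
  rw [h1, h2]
  exact hC (Int.fract t, x - intVec N k) ⟨⟨Int.fract_nonneg t, (Int.fract_lt_one t).le⟩,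
    by simpa using hk⟩

end Conclusion

/-- **Convergence for `s < 1/2` (Theorem 1.3).** Under (H1)–(H4), the solution `u^ε` of
`∂_t u^ε = I_s[u^ε] − W'(u^ε/ε^{2s}) + σ(t/ε^{2s}, x/ε)`, `u^ε(0,·) = u₀`, converges locally
uniformly to the solution `u⁰` of `∂_t u = H̄₂(I_s[u(t,·)])`, `u(0,·) = u₀`,
where `H̄₂(L) = H̄(0,L)`. -/
theorem convergence_s_lt_half
    (N : ℕ) (hN : 1 ≤ N) (s : ℝ) (hs : s ∈ Set.Ioo (0 : ℝ) (1/2))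
    (g : EN N → ℝ) (hg : H1 N g)
    (W : ℝ → ℝ) (hW : H2 W)
    (σ : ℝ → EN N → ℝ) (hσ : H3 N σ)
    (u₀ : EN N → ℝ) (hu₀ : H4 N u₀)
    -- `H̄` is the effective Hamiltonian given by the ergodicity theorem:
    (Hbar : EN N → ℝ → ℝ)
    (hHbarCont : Continuous (fun q : EN N × ℝ => Hbar q.1 q.2))
    (hHbar : ∀ (p : EN N) (L : ℝ), ∃ w : ℝ → EN N → ℝ,
      IsSol N s g (cellF N W σ p L) (fun _ => 0) w ∧ SlopeLim N w (Hbar p L))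
    -- `u^ε` is the unique viscosity solution of the `ε`-problem:
    (uε : ℝ → ℝ → EN N → ℝ)
    (huε : ∀ ε : ℝ, 0 < ε →
      IsSol N s g
        (fun t x v _ I => I - deriv W (v / ε ^ (2*s)) + σ (t / ε ^ (2*s)) (ε⁻¹ • x))
        u₀ (uε ε) ∧
      (∀ u' : ℝ → EN N → ℝ,
        IsSol N s g
          (fun t x v _ I => I - deriv W (v / ε ^ (2*s)) + σ (t / ε ^ (2*s)) (ε⁻¹ • x))
          u₀ u' → ∀ t, 0 ≤ t → ∀ x, u' t x = uε ε t x))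
    -- `u⁰` is the unique viscosity solution of the homogenized problem:
    (u0 : ℝ → EN N → ℝ)
    (hu0 : IsSol N s g (fun _ _ _ _ I => Hbar 0 I) u₀ u0)
    (hu0uniq : ∀ u' : ℝ → EN N → ℝ,
      IsSol N s g (fun _ _ _ _ I => Hbar 0 I) u₀ u' →
      ∀ t, 0 ≤ t → ∀ x, u' t x = u0 t x) :
    -- then `u^ε → u⁰` locally uniformly in `(t,x)` as `ε → 0`:
    ∀ η > 0, ∀ T > 0, ∀ R > 0, ∃ ε₀ > 0, ∀ ε : ℝ, 0 < ε → ε < ε₀ →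
      ∀ t ∈ Set.Icc (0:ℝ) T, ∀ x : EN N, ‖x‖ ≤ R → |uε ε t x - u0 t x| ≤ η := by
  intro η hη T hT R _
  obtain ⟨hWc, ⟨K, hWK⟩, hW1⟩ := hW
  obtain ⟨⟨Kσ, hσK⟩, hσ1, hσk⟩ := hσ
  obtain ⟨hu₀c, M₀, hM₀⟩ := hu₀
  have hf : ∀ a b, |deriv W a - deriv W b| ≤ K * |a - b| := fun a b => by
    simpa [Real.dist_eq] using hWK.dist_le_mul a b
  have hf1 : ∀ v, deriv W (v + 1) = deriv W v := fun v => by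
    rw [← deriv_comp_add_const W 1 v]
    congr 1
    exact funext hW1
  have hσc : Continuous fun q : ℝ × EN N => σ q.1 q.2 := hσK.continuous
  have hσk' : ∀ k t x, σ t (x + intVec N k) = σ t x := hσk
  obtain ⟨Cf, hCf⟩ := periodic_bdd hWK.continuous hf1
  obtain ⟨Cσ, hCσ⟩ := periodic_bdd_space hσc hσ1 hσk'
  have hC : ∀ v t x, |σ t x - deriv W v| ≤ Cσ + Cf := fun v t x =>
    (abs_sub _ _).trans (add_le_add (hCσ t x) (hCf v))
  have hH : Continuous (Hbar 0) :=
    hHbarCont.comp (f := fun L : ℝ => ((0 : EN N), L)) (by fun_prop)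
  have hcellF : ∀ L t x v (p : EN N →L[ℝ] ℝ) I,
      cellF N W σ 0 L t x v p I = I + L - deriv W v + σ t x := fun L t x v p I => by
    simp [cellF]
  have hu₀b : ∀ x, |u₀ x| ≤ M₀ := fun x => (hM₀ x).1
  have hu₀l : ∀ x, ‖fderiv ℝ u₀ x‖ ≤ M₀ := fun x => (hM₀ x).2.1
  have hz : ∀ x : EN N, |(fun _ : EN N => (0 : ℝ)) x| ≤ 0 := by simp
  have upper := one_sided (Uε := uε) (V := u0) (H := Hbar 0) hN hs hg K.2 hf hf1 hσc hσ1 hσk' hC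
    hu₀c hu₀b hu₀l hH
    (fun L => by
      obtain ⟨w, hw, hsl⟩ := hHbar 0 L
      exact ⟨w, hw.reg hz, fun y => hw.2.2.2.2.1 y, hw.viscSup (hcellF L), hsl⟩)
    (fun ε hε => (huε ε hε).1.reg hu₀b) (fun ε hε => (huε ε hε).1.2.1.2.2.1)
    (fun ε hε => (huε ε hε).1.viscSub fun _ _ _ _ _ => rfl)
    (hu0.reg hu₀b) hu0.2.2.2.2.1 (hu0.viscSup fun _ _ _ _ _ => rfl) hη hT
  -- the lower bound is the upper bound for the problem reflected by `u ↦ -u`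
  have lower := one_sided (f := fun v => -deriv W (-v)) (σ := fun t x => -σ t x)
    (u₀ := fun x => -u₀ x) (H := fun L => -Hbar 0 (-L)) (Uε := fun ε t x => -uε ε t x)
    (V := fun t x => -u0 t x) (C := Cσ + Cf) (M₀ := M₀) hN hs hg K.2
    (fun a b => by
      have := hf (-b) (-a)
      rw [show -b - -a = a - b by ring] at this
      rwa [show -deriv W (-a) - -deriv W (-b) = deriv W (-b) - deriv W (-a) by ring])
    (fun v => by
      have := hf1 (-(v + 1))
      rw [show -(v + 1) + 1 = -v by ring] at this
      rw [this])
    hσc.neg (fun t x => by rw [hσ1]) (fun k t x => by rw [hσk'])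
    (fun v t x => by
      have := hC (-v) t x
      rwa [show -σ t x - -deriv W (-v) = -(σ t x - deriv W (-v)) by ring, abs_neg])
    hu₀c.neg (by simpa using hu₀b) (fun x => by rw [fderiv_fun_neg, norm_neg]; exact hu₀l x)
    (hH.comp continuous_neg).neg
    (fun L => by
      obtain ⟨w, hw, hsl⟩ := hHbar 0 (-L)
      refine ⟨fun τ y => -w τ y, (hw.reg hz).neg, fun y => ?_, ?_, fun e he R hR => ?_⟩
      · exact neg_nonneg.2 (hw.2.1.2.2.1 y)
      · have := (hw.viscSub (hcellF (-L))).neg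
        convert this using 5
        ring
      · obtain ⟨T, hT⟩ := hsl e he R hR
        refine ⟨T, fun τ hτ y hy => ?_⟩
        have := hT τ hτ y hy
        rwa [show -w τ y / τ - -Hbar 0 (-L) = -(w τ y / τ - Hbar 0 (-L)) by ring, abs_neg])
    (fun ε hε => ((huε ε hε).1.reg hu₀b).neg)
    (fun ε hε x => neg_le_neg ((huε ε hε).1.2.2.2.2.1 x))
    (fun ε hε => by
      have := (((huε ε hε).1.viscSup (G := fun t x v I =>
        I - deriv W (v / ε ^ (2*s)) + σ (t / ε ^ (2*s)) (ε⁻¹ • x)) fun _ _ _ _ _ => rfl)).neg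
      convert this using 5
      rw [neg_div]
      ring)
    (hu0.reg hu₀b).neg (fun x => neg_le_neg (hu0.2.1.2.2.1 x))
    ((hu0.viscSub (G := fun _ _ _ I => Hbar 0 I) fun _ _ _ _ _ => rfl).neg) hη hT
  obtain ⟨ε₀, hε₀, h⟩ := mem_nhdsGT_iff_exists_Ioo_subset.1 (upper.and lower)
  refine ⟨ε₀, hε₀, fun ε h0 h1 t ht x _ => ?_⟩
  obtain ⟨k1, k2⟩ := h ⟨h0, h1⟩
  rw [abs_le]
  constructor
  · linarith [k2 t ht x]
  · exact k1 t ht x
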